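/- For every c ∈ (0, 1/2] and every C₁ > 0 there exist constants c₂, C₃ > 0 and ε₀ ∈ (0,1), depending only on c and C₁, such that the following holds. In the noise model with ε ∈ (0, ε₀), assume every entry of p lies in [c, 1−c], min_{k∈{1,…,m}} Pr_P[Π_k] ≥ c₂·ε^{1/2}·log^{1/4}(1/ε), and ‖q − E_{X∼P̃}[F(X,q)]‖₂ ≤ ε; let M be a real symmetric m×m matrix with zero diagonal satisfying ‖M − M_{P̃}^0‖₂ ≤ ε, and let α > 0 satisfy |α − min_k Pr_{P̃}[Π_k]| ≤ ε. If ‖M‖₂ ≤ C₁·ε·log(1/ε)/α, then d_TV(P_p, P_q) ≤ C₃·ε·√(log(1/ε)) / min_k Pr_P[Π_k]. -/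

import Mathlib

open scoped BigOperators Classical

/-- The index set `S` of parental configurations: pairs `(i, a)` where
`a : Parents i → Bool`. -/
abbrev BNIdx (d : ℕ) (Par : Fin d → Finset (Fin d)) :=
  (i : Fin d) × ({j : Fin d // j ∈ Par i} → Bool)

/-- The restriction of `x ∈ {0,1}^d` to the parents of node `i`. -/
def cfgOf {d : ℕ} (Par : Fin d → Finset (Fin d)) (x : Fin d → Bool) (i : Fin d) :
    {j : Fin d // j ∈ Par i} → Bool :=
  fun j => x j.1

/-- The Bayesian network `P_p` with conditional probability table `p`. -/
noncomputable def bnDist {d : ℕ} (Par : Fin d → Finset (Fin d))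
    (p : BNIdx d Par → ℝ) (x : Fin d → Bool) : ℝ :=
  ∏ i : Fin d, if x i then p ⟨i, cfgOf Par x i⟩ else 1 - p ⟨i, cfgOf Par x i⟩

/-- `Pr_R[Π_k]`, the probability of the parental configuration `k` under `R`. -/
noncomputable def prCfg {d : ℕ} (Par : Fin d → Finset (Fin d))
    (R : (Fin d → Bool) → ℝ) (k : BNIdx d Par) : ℝ :=
  ∑ x : Fin d → Bool, if cfgOf Par x k.1 = k.2 then R x else 0

/-- Probability of an event `A` under `R`. -/
noncomputable def prEvent {d : ℕ} (R : (Fin d → Bool) → ℝ)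
    (A : (Fin d → Bool) → Prop) : ℝ :=
  ∑ x : Fin d → Bool, if A x then R x else 0

/-- Expectation `E_{X ∼ R}[g(X)]`. -/
noncomputable def expec {d : ℕ} (R : (Fin d → Bool) → ℝ)
    (g : (Fin d → Bool) → ℝ) : ℝ :=
  ∑ x : Fin d → Bool, R x * g x

/-- The vector `F(x, q) ∈ ℝ^S`. -/
noncomputable def Fvec {d : ℕ} (Par : Fin d → Finset (Fin d))
    (x : Fin d → Bool) (q : BNIdx d Par → ℝ) (k : BNIdx d Par) : ℝ :=
  if cfgOf Par x k.1 = k.2 then (if x k.1 then 1 else 0) else q k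

/-- `R` is a probability distribution on the finite set `D`. -/
def IsProbDist {D : Type*} [Fintype D] (R : D → ℝ) : Prop :=
  (∀ x, 0 ≤ R x) ∧ ∑ x, R x = 1

/-- Total variation distance. -/
noncomputable def dTV {D : Type*} [Fintype D] (A B : D → ℝ) : ℝ :=
  (∑ x, |A x - B x|) / 2

/-- Squared Hellinger distance `d_H(A,B)² = 1 - Σ √(A(x)·B(x))`. -/
noncomputable def hellingerSq {D : Type*} [Fintype D] (A B : D → ℝ) : ℝ :=
  1 - ∑ x, Real.sqrt (A x * B x)

/-- Euclidean norm on `ℝ^ι`. -/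
noncomputable def enorm2 {ι : Type*} [Fintype ι] (v : ι → ℝ) : ℝ :=
  Real.sqrt (∑ k, v k ^ 2)

/-- The second-moment matrix `M_R` (relative to `q`). -/
noncomputable def covM {d : ℕ} (Par : Fin d → Finset (Fin d))
    (R : (Fin d → Bool) → ℝ) (q : BNIdx d Par → ℝ) :
    Matrix (BNIdx d Par) (BNIdx d Par) ℝ :=
  fun k l => expec R (fun x => (Fvec Par x q k - q k) * (Fvec Par x q l - q l))

/-- `M_R^0`: the matrix `M_R` with zeroed diagonal. -/
noncomputable def covM0 {d : ℕ} (Par : Fin d → Finset (Fin d))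
    (R : (Fin d → Bool) → ℝ) (q : BNIdx d Par → ℝ) :
    Matrix (BNIdx d Par) (BNIdx d Par) ℝ :=
  fun k l => if k = l then 0 else covM Par R q k l

/-- Spectral norm (ℓ²-operator norm) of a real matrix. -/
noncomputable def specNorm {ι : Type*} [Fintype ι] [DecidableEq ι]
    (M : Matrix ι ι ℝ) : ℝ :=
  ‖Matrix.toEuclideanCLM (𝕜 := ℝ) M‖

/-!
Let `D` be the `ℓ²` distance between `p` and `q`, the coordinate `k` being weighted by `Pr_P[Π_k]`,
and let `β = min_k Pr_P[Π_k]`. For a suitable unit vector `u` the statistic `⟨u, F(X, q) - q⟩` has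
`P`-mean at least `√β D`, whereas its `P̃`-mean is at most `ε`, so `w_E E` and `w_L L` must account
for the difference. By the Cauchy–Schwarz inequality this takes second moments of order `β D² / ε`.
* Since `w_L L ≤ w_P P` and the statistic centered at `p` is subgaussian under `P`, the removed part
  contributes only `O(ε log (1 / ε) + ε D² / β)`.
* The off-diagonal part of the second moment under `P̃` is at most `‖M_{P̃}^0‖`. Under `P` it is at
  least `-(2 D + D²)`, because the residuals of the nodes are uncorrelated at `q = p`. Hence the
  added part contributes at most `‖M_{P̃}^0‖ + O(ε log (1 / ε) + D + D²)`.

Solving the resulting quadratic inequality gives `√β D = O(ε √(log (1 / ε)) / √β)`. Finally, the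
chain rule for the Kullback–Leibler divergence, compared with `d_TV` through the Hellinger
distance, bounds `d_TV(P_p, P_q)` by a multiple of `D`.
-/

section CausalSums

variable {A β : Type*} {n : ℕ}

theorem snoc_congr_of_dependsOn {f : (Fin (n + 1) → A) → β} {i : Fin n}
    (hf : DependsOn f (Set.Iic i.castSucc)) {y z : Fin n → A} (hyz : ∀ j ≤ i, y j = z j) (a b : A) :
    f (Fin.snoc y a : Fin (n + 1) → A) = f (Fin.snoc z b : Fin (n + 1) → A) := by
  refine hf fun j hj => ?_
  obtain ⟨j, rfl⟩ := Fin.exists_castSucc_eq.2 (hj.trans_lt i.castSucc_lt_last).ne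
  simpa using hyz j (by simpa using hj)

variable [Fintype A] [Inhabited A] {R : Type*} [CommSemiring R]

theorem sum_prod_eq_sum_prod_snoc {f : Fin (n + 1) → (Fin (n + 1) → A) → R}
    (hf : ∀ i, DependsOn (f i) (Set.Iic i)) :
    ∑ x, ∏ i, f i x = ∑ y : Fin n → A, (∏ i : Fin n, f i.castSucc (Fin.snoc y default)) *
      ∑ a, f (Fin.last n) (Function.update (Fin.snoc y default) (Fin.last n) a) := by
  rw [← (Fin.snocEquiv fun _ : Fin (n + 1) => A).sum_comp, Fintype.sum_prod_type_right]
  refine Finset.sum_congr rfl fun y _ => ?_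
  rw [Finset.mul_sum]
  refine Finset.sum_congr rfl fun a _ => ?_
  rw [Fin.prod_univ_castSucc, Fin.update_snoc_last]
  congr 1
  exact Finset.prod_congr rfl fun i _ => snoc_congr_of_dependsOn (hf _) (fun _ _ => rfl) _ _

theorem sum_prod_eq_prod_of_sum_update_eq {d : ℕ} {f : Fin d → (Fin d → A) → R} {K : Fin d → R}
    (hf : ∀ i, DependsOn (f i) (Set.Iic i))
    (hK : ∀ i x, ∑ a, f i (Function.update x i a) = K i) :
    ∑ x, ∏ i, f i x = ∏ i, K i := by
  induction d with
  | zero => simp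
  | succ n ih =>
    rw [sum_prod_eq_sum_prod_snoc hf, Fin.prod_univ_castSucc]
    simp only [hK (Fin.last n)]
    rw [← Finset.sum_mul, ih (f := fun i y => f i.castSucc (Fin.snoc y default))]
    · exact fun i y z hyz => snoc_congr_of_dependsOn (hf _) hyz _ _
    · intro i y
      simpa only [Fin.snoc_update] using hK i.castSucc (Fin.snoc y default)

theorem sum_prod_le_prod_of_sum_update_le [PartialOrder R] [IsOrderedRing R] {d : ℕ}
    {f : Fin d → (Fin d → A) → R} {K : Fin d → R} (hf₀ : ∀ i x, 0 ≤ f i x)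
    (hf : ∀ i, DependsOn (f i) (Set.Iic i))
    (hK : ∀ i x, ∑ a, f i (Function.update x i a) ≤ K i) :
    ∑ x, ∏ i, f i x ≤ ∏ i, K i := by
  induction d with
  | zero => simp
  | succ n ih =>
    rw [sum_prod_eq_sum_prod_snoc hf, Fin.prod_univ_castSucc]
    have hK_last : 0 ≤ K (Fin.last n) :=
      (Finset.sum_nonneg fun _ _ => hf₀ _ _).trans (hK (Fin.last n) default)
    have hinit : ∑ y : Fin n → A, ∏ i : Fin n, f i.castSucc (Fin.snoc y default) ≤
        ∏ i : Fin n, K i.castSucc := by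
      refine ih (fun i y => hf₀ _ _) ?_ ?_
      · exact fun i y z hyz => snoc_congr_of_dependsOn (hf _) hyz _ _
      · intro i y
        simpa only [Fin.snoc_update] using hK i.castSucc (Fin.snoc y default)
    refine le_trans ?_ (mul_le_mul_of_nonneg_right hinit hK_last)
    rw [Finset.sum_mul]
    gcongr with y
    · exact Finset.prod_nonneg fun i _ => hf₀ _ _
    · exact hK _ _

end CausalSums

section RealInequalities

theorem exp_le_add_exp_sq (x : ℝ) : Real.exp x ≤ x + Real.exp (x ^ 2) := by
  have hsq := Real.add_one_le_exp (x ^ 2)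
  rcases le_total |x| 1 with hx | hx
  · have := (abs_le.1 (Real.abs_exp_sub_one_sub_id_le hx)).2
    linarith
  rcases le_total 0 x with hx₀ | hx₀
  · rw [abs_of_nonneg hx₀] at hx
    have : Real.exp x ≤ Real.exp (x ^ 2) := Real.exp_le_exp.2 (by nlinarith)
    linarith
  · rw [abs_of_nonpos hx₀] at hx
    have : Real.exp x ≤ 1 := Real.exp_le_one_iff.2 hx₀
    nlinarith

theorem sum_mul_exp_le_exp_sq {ι : Type*} [Fintype ι] {w y : ι → ℝ} (hw : IsProbDist w)
    (hmean : ∑ i, w i * y i = 0) (hy : ∀ i, |y i| ≤ 1) (s : ℝ) :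
    ∑ i, w i * Real.exp (s * y i) ≤ Real.exp (s ^ 2) := by
  have hpt (i : ι) : Real.exp (s * y i) ≤ s * y i + Real.exp (s ^ 2) := by
    refine (exp_le_add_exp_sq _).trans (add_le_add_right (Real.exp_le_exp.2 ?_) _)
    rw [mul_pow]
    exact mul_le_of_le_one_right (sq_nonneg s) ((sq_le_one_iff_abs_le_one _).2 (hy i))
  calc ∑ i, w i * Real.exp (s * y i)
      ≤ ∑ i, w i * (s * y i + Real.exp (s ^ 2)) :=
        Finset.sum_le_sum fun i _ => mul_le_mul_of_nonneg_left (hpt i) (hw.1 i)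
    _ = s * ∑ i, w i * y i + (∑ i, w i) * Real.exp (s ^ 2) := by
        rw [Finset.mul_sum, Finset.sum_mul, ← Finset.sum_add_distrib]
        exact Finset.sum_congr rfl fun i _ => by ring
    _ = Real.exp (s ^ 2) := by rw [hmean, hw.2]; ring

theorem sq_le_one_add_exp {a y : ℝ} (ha : 2 ≤ a) (hy : 0 ≤ y) :
    y ^ 2 ≤ 1 + Real.exp (a * (y - 1)) := by
  rcases le_total y 1 with hy₁ | hy₁
  · nlinarith [Real.exp_pos (a * (y - 1))]
  have hexp : y ≤ Real.exp (y - 1) := by linarith [Real.add_one_le_exp (y - 1)]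
  calc y ^ 2 ≤ Real.exp (y - 1) ^ 2 := by gcongr
    _ = Real.exp (2 * (y - 1)) := by rw [← Real.exp_nat_mul]; norm_num
    _ ≤ Real.exp (a * (y - 1)) := by gcongr
    _ ≤ 1 + Real.exp (a * (y - 1)) := by linarith

theorem sq_le_mul_one_add_cosh {l : ℝ} (hl : 1 ≤ l) (t : ℝ) :
    t ^ 2 ≤ 4 * l * (1 + 2 * Real.exp (-(2 * l)) * Real.cosh (√l * t)) := by
  have hl₀ : 0 < l := by linarith
  have hs : √l ^ 2 = l := Real.sq_sqrt hl₀.le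
  have hs₀ : 0 < √l := Real.sqrt_pos.2 hl₀
  have hcosh : Real.exp (√l * |t|) ≤ 2 * Real.cosh (√l * t) := by
    rw [← Real.cosh_abs (√l * t), abs_mul, abs_of_pos hs₀, Real.cosh_eq]
    linarith [Real.exp_pos (-(√l * |t|))]
  have hscaled : 2 * l * (|t| / (2 * √l) - 1) = -(2 * l) + √l * |t| := by
    field_simp
    linear_combination -|t| * hs
  calc t ^ 2 = 4 * l * (|t| / (2 * √l)) ^ 2 := by
        rw [div_pow, sq_abs, mul_pow, hs]; field_simp; ring
    _ ≤ 4 * l * (1 + Real.exp (2 * l * (|t| / (2 * √l) - 1))) := by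
        gcongr; exact sq_le_one_add_exp (by linarith) (by positivity)
    _ = 4 * l * (1 + Real.exp (-(2 * l)) * Real.exp (√l * |t|)) := by
        rw [hscaled, Real.exp_add]
    _ ≤ 4 * l * (1 + 2 * Real.exp (-(2 * l)) * Real.cosh (√l * t)) := by
        have := mul_le_mul_of_nonneg_left hcosh (Real.exp_nonneg (-(2 * l)))
        gcongr 4 * l * (1 + ?_)
        linarith

end RealInequalities

section Expectation

variable {d : ℕ} {P R g h : (Fin d → Bool) → ℝ}

theorem expec_add (R g h : (Fin d → Bool) → ℝ) :
    expec R (fun x => g x + h x) = expec R g + expec R h := by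
  simp only [expec, mul_add, Finset.sum_add_distrib]

theorem expec_const_mul (R : (Fin d → Bool) → ℝ) (a : ℝ) (g : (Fin d → Bool) → ℝ) :
    expec R (fun x => a * g x) = a * expec R g := by
  simp only [expec, Finset.mul_sum, mul_left_comm]

theorem expec_sum {ι : Type*} (s : Finset ι) (R : (Fin d → Bool) → ℝ)
    (g : ι → (Fin d → Bool) → ℝ) :
    expec R (fun x => ∑ i ∈ s, g i x) = ∑ i ∈ s, expec R (g i) := by
  simp only [expec, Finset.mul_sum]
  exact Finset.sum_comm

theorem expec_const (hR : IsProbDist R) (a : ℝ) : expec R (fun _ => a) = a := by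
  rw [expec, ← Finset.sum_mul, hR.2, one_mul]

theorem expec_mono (hR : ∀ x, 0 ≤ R x) (hgh : ∀ x, g x ≤ h x) : expec R g ≤ expec R h :=
  Finset.sum_le_sum fun x _ => mul_le_mul_of_nonneg_left (hgh x) (hR x)

theorem expec_nonneg (hR : ∀ x, 0 ≤ R x) (hg : ∀ x, 0 ≤ g x) : 0 ≤ expec R g :=
  Finset.sum_nonneg fun x _ => mul_nonneg (hR x) (hg x)

theorem expec_le_of_le (hR : IsProbDist R) {a : ℝ} (hg : ∀ x, g x ≤ a) : expec R g ≤ a :=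
  (expec_mono hR.1 hg).trans_eq (expec_const hR a)

theorem abs_expec_le_of_abs_le (hR : IsProbDist R) {a : ℝ} (hg : ∀ x, |g x| ≤ a) :
    |expec R g| ≤ a := by
  have hlower := expec_mono hR.1 fun x => (abs_le.1 (hg x)).1
  rw [expec_const hR] at hlower
  exact abs_le.2 ⟨hlower, expec_le_of_le hR fun x => (abs_le.1 (hg x)).2⟩

theorem sq_expec_mul_le (hR : ∀ x, 0 ≤ R x) (g h : (Fin d → Bool) → ℝ) :
    expec R (fun x => g x * h x) ^ 2 ≤
      expec R (fun x => g x ^ 2) * expec R (fun x => h x ^ 2) := by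
  exact Finset.sum_sq_le_sum_mul_sum_of_sq_le_mul Finset.univ
    (fun x _ => mul_nonneg (hR x) (sq_nonneg _)) (fun x _ => mul_nonneg (hR x) (sq_nonneg _))
    fun x _ => le_of_eq (by ring)

theorem sq_expec_le (hR : IsProbDist R) (g : (Fin d → Bool) → ℝ) :
    expec R g ^ 2 ≤ expec R (fun x => g x ^ 2) := by
  simpa [expec_const hR] using sq_expec_mul_le hR.1 g fun _ => 1

theorem expec_sq_le_of_expec_cosh_le {w m l : ℝ} (hw : 0 ≤ w) (hl : 1 ≤ l)
    (hR : ∀ x, 0 ≤ R x) (hRP : ∀ x, R x ≤ w * P x) (hRm : ∑ x, R x ≤ m)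
    (hcosh : expec P (fun x => Real.cosh (√l * g x)) ≤ Real.exp l) :
    expec R (fun x => g x ^ 2) ≤ 4 * l * (m + 2 * w * Real.exp (-l)) := by
  have hRcosh : expec R (fun x => Real.cosh (√l * g x)) ≤ w * Real.exp l := by
    refine le_trans ?_ (mul_le_mul_of_nonneg_left hcosh hw)
    rw [expec, expec, Finset.mul_sum]
    refine Finset.sum_le_sum fun x _ => ?_
    rw [← mul_assoc]
    exact mul_le_mul_of_nonneg_right (hRP x) (Real.cosh_pos _).le
  calc expec R (fun x => g x ^ 2)
      ≤ expec R (fun x => 4 * l * (1 + 2 * Real.exp (-(2 * l)) * Real.cosh (√l * g x))) :=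
        expec_mono hR fun x => sq_le_mul_one_add_cosh hl (g x)
    _ = 4 * l * (∑ x, R x +
          2 * Real.exp (-(2 * l)) * expec R (fun x => Real.cosh (√l * g x))) := by
        rw [expec_const_mul, expec_add, expec_const_mul]
        simp only [expec, mul_one]
    _ ≤ 4 * l * (m + 2 * Real.exp (-(2 * l)) * (w * Real.exp l)) := by gcongr
    _ = 4 * l * (m + 2 * w * Real.exp (-l)) := by
        have : Real.exp (-(2 * l)) * Real.exp l = Real.exp (-l) := by
          rw [← Real.exp_add]; congr 1; ring
        linear_combination 8 * l * w * this

end Expectation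

section Estimates

/- The scales are `W = √β D` for the error, `T = ε √l / √β` for the noise and `k² = ε K` for the
matrix; the terms `8 T W` and `W² / 400`, in which the error bounds itself, are absorbed by `W`. -/
theorem le_of_mul_le_add_sqrt_add_sqrt {k T W X Y : ℝ} (hk : 0 ≤ k) (hT : 0 ≤ T) (hW : 0 ≤ W)
    (hX : X ≤ 2 * k ^ 2 + 100 * T ^ 2 + 8 * (T * W) + W ^ 2 / 400)
    (hY : Y ≤ 96 * T ^ 2 + W ^ 2 / 10 ^ 4) (h : 0.98 * W ≤ T + √X + √Y) :
    W ≤ 3 * k + 63 * T := by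
  have hX_sqrt : √X ≤ 2 * k + 42 * T + W / 8 := by
    refine Real.sqrt_le_iff.2 ⟨by positivity, hX.trans ?_⟩
    nlinarith [sq_nonneg (1600 * T - 4 * W), mul_nonneg hk hT, mul_nonneg hk hW, mul_nonneg hT hW]
  have hY_sqrt : √Y ≤ 10 * T + W / 100 := by
    refine Real.sqrt_le_iff.2 ⟨by positivity, hY.trans ?_⟩
    nlinarith [mul_nonneg hT hW]
  linarith

theorem sqrt_mul_le_of_mul_sqrt_mul_le {ε β l D K : ℝ} (hε : 0 ≤ ε) (hεβ : 2000 * ε ≤ β)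
    (hβ₀ : 0 < β) (hβ₁ : β ≤ 1) (hl : 1 ≤ l) (hD : 0 ≤ D) (hK : 0 ≤ K)
    (h : 0.98 * (√β * D) ≤ ε +
      √(2 * ε * (K + 2 * ε + 2 * (2 * D + D ^ 2) + (48 * ε * l + 4 * ε * (D ^ 2 / β)))) +
        √(2 * ε * (48 * ε * l + 4 * ε * (D ^ 2 / β)))) :
    √β * D ≤ 3 * √(ε * K) + 63 * (ε * √l / √β) := by
  have hβ_sqrt : √β ^ 2 = β := Real.sq_sqrt hβ₀.le
  have hTsq : ε ^ 2 * l ≤ (ε * √l / √β) ^ 2 := by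
    rw [div_pow, mul_pow, hβ_sqrt, Real.sq_sqrt (by linarith)]
    exact le_div_self (by positivity) hβ₀ hβ₁
  have hTW : ε * D ≤ ε * √l / √β * (√β * D) := by
    rw [← mul_assoc, div_mul_cancel₀ _ (Real.sqrt_pos.2 hβ₀).ne']
    gcongr
    exact le_mul_of_one_le_right hε (Real.one_le_sqrt.2 hl)
  have hWsq : 2000 * (ε * D ^ 2) ≤ (√β * D) ^ 2 := by
    rw [mul_pow, hβ_sqrt, ← mul_assoc]
    gcongr
  have hWsq' : 2000 ^ 2 * (ε ^ 2 * (D ^ 2 / β)) ≤ (√β * D) ^ 2 := by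
    calc 2000 ^ 2 * (ε ^ 2 * (D ^ 2 / β)) = (2000 * ε) ^ 2 * (D ^ 2 / β) := by ring
      _ ≤ β ^ 2 * (D ^ 2 / β) := by gcongr
      _ = (√β * D) ^ 2 := by rw [mul_pow, hβ_sqrt]; field_simp
  have hεsq : ε ^ 2 ≤ ε ^ 2 * l := le_mul_of_one_le_right (sq_nonneg ε) hl
  have hεK : √(ε * K) ^ 2 = ε * K := Real.sq_sqrt (mul_nonneg hε hK)
  have hεT : ε ≤ ε * √l / √β := (abs_le_of_sq_le_sq' (hεsq.trans hTsq) (by positivity)).2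
  refine le_of_mul_le_add_sqrt_add_sqrt (by positivity) (by positivity) (by positivity) ?_ ?_
    (h.trans (by gcongr)) <;> nlinarith

theorem sqrt_mul_add_le {ε β l α C : ℝ} (hε : 0 ≤ ε) (hβ₀ : 0 < β) (hβ₁ : β ≤ 1) (hl : 1 ≤ l)
    (hα : β / 2 ≤ α) (hC : 0 ≤ C) :
    √(ε * (C * ε * l / α + ε)) ≤ (C + 1) * (ε * √l / √β) := by
  have hl₀ : 0 < l := by linarith
  have hαβ : C * ε * l / α ≤ 2 * C * (ε * l / β) := by
    calc C * ε * l / α ≤ C * ε * l / (β / 2) := by gcongr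
      _ = 2 * C * (ε * l / β) := by field_simp
  have hεβ : ε ≤ ε * l / β := (le_mul_of_one_le_right hε hl).trans
    (le_div_self (by positivity) hβ₀ hβ₁)
  refine Real.sqrt_le_iff.2 ⟨by positivity, ?_⟩
  calc ε * (C * ε * l / α + ε) ≤ ε * (2 * C * (ε * l / β) + ε * l / β) := by gcongr
    _ = (2 * C + 1) * (ε ^ 2 * l / β) := by ring
    _ ≤ (C + 1) ^ 2 * (ε ^ 2 * l / β) := by
        gcongr
        linarith [sq_nonneg C, add_sq C 1]
    _ = ((C + 1) * (ε * √l / √β)) ^ 2 := by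
        rw [mul_pow, div_pow, mul_pow, Real.sq_sqrt hl₀.le, Real.sq_sqrt hβ₀.le]

theorem one_le_log_one_div {ε : ℝ} (hε : 0 < ε) (hε₁ : ε ≤ Real.exp (-1)) :
    1 ≤ Real.log (1 / ε) := by
  rw [one_div, Real.log_inv, le_neg, Real.log_le_iff_le_exp hε]
  exact hε₁

theorem le_sqrt_mul_rpow_log {ε : ℝ} (hε : 0 < ε) (hε₁ : ε ≤ Real.exp (-1)) {s : ℝ}
    (hs : 0 ≤ s) : ε ≤ √ε * Real.log (1 / ε) ^ s := by
  have hε_one : ε ≤ 1 := hε₁.trans (Real.exp_le_one_iff.2 (by norm_num))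
  have hε_sqrt : ε ≤ √ε := Real.le_sqrt_of_sq_le (by nlinarith)
  exact hε_sqrt.trans (le_mul_of_one_le_right (Real.sqrt_nonneg ε)
    (Real.one_le_rpow (one_le_log_one_div hε hε₁) hs))

end Estimates

section Noise

variable {d : ℕ}

/-- The noise model: `R` arises from the distribution `P` by adding a part `wE · E` and removing a
part `wL · L`, where `E` and `L` are distributions with disjoint supports and the total weight
`wE + wL` is at most `2ε`. -/
structure NoiseModel (ε : ℝ) (P R E L : (Fin d → Bool) → ℝ) (wP wE wL : ℝ) : Prop where
  isProbDist_P : IsProbDist P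
  isProbDist_R : IsProbDist R
  isProbDist_E : IsProbDist E
  isProbDist_L : IsProbDist L
  disjoint_support (x : Fin d → Bool) : E x = 0 ∨ L x = 0
  wE_nonneg : 0 ≤ wE
  wL_nonneg : 0 ≤ wL
  wE_add_wL_le : wE + wL ≤ 2 * ε
  wP_add_wE_sub_wL : wP + wE - wL = 1
  apply_eq (x : Fin d → Bool) : R x = wP * P x + wE * E x - wL * L x

theorem abs_mul_expec_le_sqrt {S : (Fin d → Bool) → ℝ} (hS : IsProbDist S) {w a X : ℝ}
    (hw : 0 ≤ w) (hwa : w ≤ a) {g : (Fin d → Bool) → ℝ}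
    (hX : w * expec S (fun x => g x ^ 2) ≤ X) : |w * expec S g| ≤ √(a * X) := by
  have hsq : 0 ≤ w * expec S (fun x => g x ^ 2) :=
    mul_nonneg hw (expec_nonneg hS.1 fun _ => sq_nonneg _)
  refine Real.abs_le_sqrt ?_
  calc (w * expec S g) ^ 2 = w * (w * expec S g ^ 2) := by ring
    _ ≤ w * (w * expec S (fun x => g x ^ 2)) := by gcongr; exact sq_expec_le hS g
    _ ≤ a * X := mul_le_mul hwa hX hsq (hw.trans hwa)

namespace NoiseModel

variable {ε wP wE wL : ℝ} {P R E L g : (Fin d → Bool) → ℝ}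
  (hN : NoiseModel ε P R E L wP wE wL)
include hN

theorem wE_le : wE ≤ 2 * ε := by linarith [hN.wE_add_wL_le, hN.wL_nonneg]

theorem wL_le : wL ≤ 2 * ε := by linarith [hN.wE_add_wL_le, hN.wE_nonneg]

theorem one_sub_le_wP : 1 - 2 * ε ≤ wP := by
  linarith [hN.wE_le, hN.wL_nonneg, hN.wP_add_wE_sub_wL]

theorem wP_le_one_add : wP ≤ 1 + 2 * ε := by
  linarith [hN.wL_le, hN.wE_nonneg, hN.wP_add_wE_sub_wL]

theorem expec_eq (g : (Fin d → Bool) → ℝ) :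
    expec R g = wP * expec P g + wE * expec E g - wL * expec L g := by
  simp only [expec, hN.apply_eq, Finset.mul_sum, ← Finset.sum_add_distrib,
    ← Finset.sum_sub_distrib]
  exact Finset.sum_congr rfl fun x _ => by ring

theorem abs_expec_sub_le (hg : ∀ x, |g x| ≤ 1) : |expec R g - wP * expec P g| ≤ 2 * ε := by
  have hE := abs_expec_le_of_abs_le hN.isProbDist_E hg
  have hL := abs_expec_le_of_abs_le hN.isProbDist_L hg
  calc |expec R g - wP * expec P g| = |wE * expec E g - wL * expec L g| := by
        rw [hN.expec_eq]
        congr 1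
        ring
    _ ≤ wE * |expec E g| + wL * |expec L g| := by
        refine (abs_sub _ _).trans_eq ?_
        rw [abs_mul, abs_mul, abs_of_nonneg hN.wE_nonneg, abs_of_nonneg hN.wL_nonneg]
    _ ≤ wE * 1 + wL * 1 := by
        gcongr
        exacts [hN.wE_nonneg, hN.wL_nonneg]
    _ ≤ 2 * ε := by linarith [hN.wE_add_wL_le]

theorem wL_mul_le (hwP : 0 ≤ wP) (x : Fin d → Bool) : wL * L x ≤ wP * P x := by
  rcases hN.disjoint_support x with hEx | hLx
  · have hR := hN.isProbDist_R.1 x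
    rw [hN.apply_eq, hEx] at hR
    linarith
  · rw [hLx, mul_zero]
    exact mul_nonneg hwP (hN.isProbDist_P.1 x)

theorem wL_mul_expec_sq_le (hε : 0 < ε) (hε₁ : ε ≤ 1 / 2) (hl : 1 ≤ Real.log (1 / ε))
    (hcosh : expec P (fun x => Real.cosh (√(Real.log (1 / ε)) * g x)) ≤ 1 / ε) :
    wL * expec L (fun x => g x ^ 2) ≤ 24 * ε * Real.log (1 / ε) := by
  have hwP : 0 ≤ wP := by linarith [hN.one_sub_le_wP]
  have hexp : Real.exp (Real.log (1 / ε)) = 1 / ε := Real.exp_log (one_div_pos.2 hε)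
  have hmass : ∑ x, wL * L x ≤ 2 * ε := by
    rw [← Finset.mul_sum, hN.isProbDist_L.2, mul_one]
    exact hN.wL_le
  calc wL * expec L (fun x => g x ^ 2) = expec (fun x => wL * L x) (fun x => g x ^ 2) := by
        simp only [expec, Finset.mul_sum, mul_assoc]
    _ ≤ 4 * Real.log (1 / ε) * (2 * ε + 2 * wP * Real.exp (-Real.log (1 / ε))) :=
        expec_sq_le_of_expec_cosh_le hwP hl
          (fun x => mul_nonneg hN.wL_nonneg (hN.isProbDist_L.1 x)) (hN.wL_mul_le hwP) hmass
          (hcosh.trans_eq hexp.symm)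
    _ = 4 * Real.log (1 / ε) * (2 * ε + 2 * wP * ε) := by
        rw [Real.exp_neg, hexp, one_div, inv_inv]
    _ ≤ 4 * Real.log (1 / ε) * (2 * ε + 2 * 2 * ε) := by
        have : wP ≤ 2 := by linarith [hN.wP_le_one_add]
        gcongr
    _ = 24 * ε * Real.log (1 / ε) := by ring

end NoiseModel

end Noise

section EuclideanNorm

variable {ι : Type*} [Fintype ι]

theorem exists_sum_mul_eq_enorm2 (v : ι → ℝ) :
    ∃ u : ι → ℝ, ∑ k, u k ^ 2 ≤ 1 ∧ ∑ k, u k * v k = enorm2 v := by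
  have hsq : enorm2 v ^ 2 = ∑ k, v k ^ 2 :=
    Real.sq_sqrt (Finset.sum_nonneg fun _ _ => sq_nonneg _)
  refine ⟨fun k => v k / enorm2 v, ?_, ?_⟩
  · simp only [div_pow, ← Finset.sum_div, ← hsq]
    exact div_self_le_one _
  · simp only [div_mul_eq_mul_div, ← sq, ← Finset.sum_div, ← hsq]
    rw [sq, mul_self_div_self]

variable [DecidableEq ι]

theorem specNorm_nonneg (M : Matrix ι ι ℝ) : 0 ≤ specNorm M := norm_nonneg _

theorem specNorm_le_specNorm_add_specNorm_sub (A B : Matrix ι ι ℝ) :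
    specNorm B ≤ specNorm A + specNorm (A - B) := by
  rw [specNorm, specNorm, specNorm, map_sub]
  exact norm_le_norm_add_norm_sub _ _

theorem dotProduct_mulVec_le_specNorm (M : Matrix ι ι ℝ) {u : ι → ℝ} (hu : ∑ k, u k ^ 2 ≤ 1) :
    u ⬝ᵥ M.mulVec u ≤ specNorm M := by
  set v : EuclideanSpace ℝ ι := WithLp.toLp 2 u
  have hv : ‖v‖ ^ 2 ≤ 1 := by simpa [v, EuclideanSpace.norm_sq_eq] using hu
  calc u ⬝ᵥ M.mulVec u = inner ℝ v (Matrix.toEuclideanCLM (𝕜 := ℝ) M v) := by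
        rw [Matrix.inner_toEuclideanCLM]
    _ ≤ ‖v‖ * (specNorm M * ‖v‖) := (real_inner_le_norm _ _).trans
        (mul_le_mul_of_nonneg_left (ContinuousLinearMap.le_opNorm _ _) (norm_nonneg _))
    _ = specNorm M * ‖v‖ ^ 2 := by ring
    _ ≤ specNorm M := mul_le_of_le_one_right (specNorm_nonneg M) hv

end EuclideanNorm

section Divergence

variable {D : Type*} [Fintype D] {A B : D → ℝ}

theorem hellingerSq_eq_sum_sq (hA : IsProbDist A) (hB : IsProbDist B) :
    2 * hellingerSq A B = ∑ x, (√(A x) - √(B x)) ^ 2 := by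
  have hpt (x : D) : (√(A x) - √(B x)) ^ 2 = A x + B x - 2 * √(A x * B x) := by
    rw [Real.sqrt_mul (hA.1 x)]
    linear_combination Real.sq_sqrt (hA.1 x) + Real.sq_sqrt (hB.1 x)
  simp only [hpt, Finset.sum_sub_distrib, Finset.sum_add_distrib, hA.2, hB.2, ← Finset.mul_sum,
    hellingerSq]
  ring

theorem dTV_sq_le_two_mul_hellingerSq (hA : IsProbDist A) (hB : IsProbDist B) :
    dTV A B ^ 2 ≤ 2 * hellingerSq A B := by
  have hfactor (x : D) : |A x - B x| = |√(A x) - √(B x)| * |√(A x) + √(B x)| := by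
    rw [← abs_mul]
    congr 1
    linear_combination -(Real.sq_sqrt (hA.1 x)) + Real.sq_sqrt (hB.1 x)
  have hsum : ∑ x, (√(A x) + √(B x)) ^ 2 ≤ 4 := by
    have hpt (x : D) : (√(A x) + √(B x)) ^ 2 ≤ 2 * (A x + B x) := by
      rw [← Real.sq_sqrt (hA.1 x), ← Real.sq_sqrt (hB.1 x), Real.sqrt_sq (Real.sqrt_nonneg _),
        Real.sqrt_sq (Real.sqrt_nonneg _)]
      exact add_sq_le
    refine (Finset.sum_le_sum fun x _ => hpt x).trans_eq ?_
    rw [← Finset.mul_sum, Finset.sum_add_distrib, hA.2, hB.2]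
    norm_num
  have hcs : (∑ x, |A x - B x|) ^ 2 ≤
      (∑ x, (√(A x) - √(B x)) ^ 2) * ∑ x, (√(A x) + √(B x)) ^ 2 := by
    simpa only [hfactor, sq_abs] using Finset.sum_mul_sq_le_sq_mul_sq Finset.univ
      (fun x => |√(A x) - √(B x)|) (fun x => |√(A x) + √(B x)|)
  have hnonneg : 0 ≤ ∑ x, (√(A x) - √(B x)) ^ 2 := Finset.sum_nonneg fun _ _ => sq_nonneg _
  rw [hellingerSq_eq_sum_sq hA hB, dTV, div_pow]
  nlinarith [mul_le_mul_of_nonneg_left hsum hnonneg]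

theorem two_mul_hellingerSq_le_sum_mul_log (hA : ∀ x, 0 < A x) (hA₁ : ∑ x, A x = 1)
    (hB : ∀ x, 0 < B x) :
    2 * hellingerSq A B ≤ ∑ x, A x * Real.log (A x / B x) := by
  have hpt (x : D) : A x * (2 - Real.log (A x / B x)) ≤ 2 * √(A x * B x) := by
    have hsqrt : √(A x * B x) = A x * √(B x / A x) := by
      rw [← Real.sqrt_sq (hA x).le, ← Real.sqrt_mul (sq_nonneg _), Real.sqrt_sq (hA x).le]
      congr 1
      field_simp [(hA x).ne']
    have hlog : Real.log √(B x / A x) = -(Real.log (A x / B x)) / 2 := by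
      rw [Real.log_sqrt (div_pos (hB x) (hA x)).le, ← inv_div (A x), Real.log_inv]
    have := Real.log_le_sub_one_of_pos (Real.sqrt_pos.2 (div_pos (hB x) (hA x)))
    rw [hsqrt]
    nlinarith [hA x]
  have hsum := Finset.sum_le_sum fun x (_ : x ∈ Finset.univ) => hpt x
  simp only [mul_sub, Finset.sum_sub_distrib, ← Finset.sum_mul, hA₁, ← Finset.mul_sum] at hsum
  rw [hellingerSq]
  linarith

end Divergence

section BayesNet

variable {d : ℕ} {Par : Fin d → Finset (Fin d)}

/-- The index `(i, a(i, x)) ∈ S` of the parental configuration of node `i` seen at `x`. -/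
def activeCfg (Par : Fin d → Finset (Fin d)) (x : Fin d → Bool) (i : Fin d) : BNIdx d Par :=
  ⟨i, cfgOf Par x i⟩

/-- The conditional probability, under `P_p`, that node `i` takes the value `x i` given the values
of its parents at `x`. -/
noncomputable def condProb (Par : Fin d → Finset (Fin d)) (p : BNIdx d Par → ℝ) (i : Fin d)
    (x : Fin d → Bool) : ℝ :=
  if x i then p (activeCfg Par x i) else 1 - p (activeCfg Par x i)

/-- The value of node `i` at `x`, centered by its conditional mean `q_{i, a(i, x)}` under `P_q`. -/
noncomputable def bnResidual (Par : Fin d → Finset (Fin d)) (q : BNIdx d Par → ℝ) (i : Fin d)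
    (x : Fin d → Bool) : ℝ :=
  (if x i then 1 else 0) - q (activeCfg Par x i)

/-- The sum of `φ` over the `d` parental configurations to which `x` belongs. -/
noncomputable def activeSum (φ : BNIdx d Par → ℝ) (x : Fin d → Bool) : ℝ :=
  ∑ i, φ (activeCfg Par x i)

/-- The inner product of `u` with the vector `F(x, q) - q`. -/
noncomputable def linStat (u q : BNIdx d Par → ℝ) (x : Fin d → Bool) : ℝ :=
  ∑ k, u k * (Fvec Par x q k - q k)

/-- The diagonal part of `linStat u q x ^ 2`, which the matrices `M_R^0` leave out. -/
noncomputable def diagStat (u q : BNIdx d Par → ℝ) (x : Fin d → Bool) : ℝ :=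
  ∑ k, (u k * (Fvec Par x q k - q k)) ^ 2

theorem bnDist_eq_prod_condProb (p : BNIdx d Par → ℝ) (x : Fin d → Bool) :
    bnDist Par p x = ∏ i, condProb Par p i x := rfl

section Causality

variable (hPar : ∀ i : Fin d, ∀ j ∈ Par i, j < i)
include hPar

theorem dependsOn_activeCfg (i : Fin d) :
    DependsOn (fun x => activeCfg Par x i) (Set.Iio i) := fun _ _ hxy =>
  congrArg (Sigma.mk i) (funext fun j => hxy j.1 (hPar i j.1 j.2))

theorem activeCfg_update (x : Fin d → Bool) (i : Fin d) (b : Bool) :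
    activeCfg Par (Function.update x i b) i = activeCfg Par x i :=
  dependsOn_activeCfg hPar i fun _ hj => Function.update_of_ne hj.ne _ _

theorem dependsOn_condProb (p : BNIdx d Par → ℝ) (i : Fin d) :
    DependsOn (condProb Par p i) (Set.Iic i) := by
  intro x y hxy
  have hcfg : activeCfg Par x i = activeCfg Par y i :=
    dependsOn_activeCfg hPar i fun j hj => hxy j (Set.Iio_subset_Iic_self hj)
  rw [condProb, condProb, hcfg, hxy i Set.self_mem_Iic]

theorem dependsOn_bnResidual (q : BNIdx d Par → ℝ) (i : Fin d) :
    DependsOn (bnResidual Par q i) (Set.Iic i) := by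
  intro x y hxy
  have hcfg : activeCfg Par x i = activeCfg Par y i :=
    dependsOn_activeCfg hPar i fun j hj => hxy j (Set.Iio_subset_Iic_self hj)
  rw [bnResidual, bnResidual, hcfg, hxy i Set.self_mem_Iic]

theorem sum_condProb_update (p : BNIdx d Par → ℝ) (i : Fin d) (x : Fin d → Bool) :
    ∑ b, condProb Par p i (Function.update x i b) = 1 := by
  simp [condProb, activeCfg_update hPar]

theorem sum_condProb_mul_bnResidual_update (p : BNIdx d Par → ℝ) (i : Fin d) (x : Fin d → Bool) :
    ∑ b, condProb Par p i (Function.update x i b) *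
      bnResidual Par p i (Function.update x i b) = 0 := by
  simp only [Fintype.sum_bool, condProb, bnResidual, activeCfg_update hPar, Function.update_self,
    if_true, Bool.false_eq_true, if_false]
  ring

theorem sum_bnDist (p : BNIdx d Par → ℝ) : ∑ x, bnDist Par p x = 1 := by
  simpa only [Finset.prod_const_one, bnDist_eq_prod_condProb] using
    sum_prod_eq_prod_of_sum_update_eq (dependsOn_condProb hPar p) (sum_condProb_update hPar p)

theorem expec_bnResidual_mul (p : BNIdx d Par → ℝ) (i : Fin d) {h : (Fin d → Bool) → ℝ}
    (hh : DependsOn h (Set.Iio i)) :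
    expec (bnDist Par p) (fun x => bnResidual Par p i x * h x) = 0 := by
  let f : Fin d → (Fin d → Bool) → ℝ := fun j x =>
    condProb Par p j x * if j = i then bnResidual Par p i x * h x else 1
  have hf (j : Fin d) : DependsOn (f j) (Set.Iic j) := by
    intro x y hxy
    simp only [f]
    rw [dependsOn_condProb hPar p j hxy]
    split_ifs with hji
    · subst hji
      rw [dependsOn_bnResidual hPar p j hxy, hh fun k hk => hxy k (Set.Iio_subset_Iic_self hk)]
    · rfl
  have hsum (j : Fin d) (x : Fin d → Bool) :
      ∑ b, f j (Function.update x j b) = if j = i then 0 else 1 := by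
    simp only [f]
    split_ifs with hji
    · subst hji
      have hconst (b : Bool) : h (Function.update x j b) = h x :=
        hh fun k hk => Function.update_of_ne hk.ne _ _
      simp only [hconst, ← mul_assoc]
      rw [← Finset.sum_mul, sum_condProb_mul_bnResidual_update hPar, zero_mul]
    · simp only [mul_one, sum_condProb_update hPar]
  calc expec (bnDist Par p) (fun x => bnResidual Par p i x * h x)
      = ∑ x, ∏ j, f j x := by
        refine Finset.sum_congr rfl fun x _ => ?_
        rw [Finset.prod_mul_distrib, Finset.prod_ite_eq' Finset.univ i,
          if_pos (Finset.mem_univ i), ← bnDist_eq_prod_condProb]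
    _ = ∏ j, if j = i then (0 : ℝ) else 1 := sum_prod_eq_prod_of_sum_update_eq hf hsum
    _ = 0 := Finset.prod_eq_zero (Finset.mem_univ i) (if_pos rfl)

end Causality

theorem condProb_nonneg {p : BNIdx d Par → ℝ} (hp : ∀ k, p k ∈ Set.Icc (0 : ℝ) 1) (i : Fin d)
    (x : Fin d → Bool) : 0 ≤ condProb Par p i x := by
  rw [condProb]
  split_ifs
  · exact (hp _).1
  · exact sub_nonneg.2 (hp _).2

theorem isProbDist_bnDist (hPar : ∀ i : Fin d, ∀ j ∈ Par i, j < i) {p : BNIdx d Par → ℝ}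
    (hp : ∀ k, p k ∈ Set.Icc (0 : ℝ) 1) : IsProbDist (bnDist Par p) :=
  ⟨fun x => Finset.prod_nonneg fun i _ => condProb_nonneg hp i x, sum_bnDist hPar p⟩

theorem abs_bnResidual_le_one {q : BNIdx d Par → ℝ} (hq : ∀ k, q k ∈ Set.Icc (0 : ℝ) 1)
    (i : Fin d) (x : Fin d → Bool) : |bnResidual Par q i x| ≤ 1 := by
  obtain ⟨h₀, h₁⟩ := hq (activeCfg Par x i)
  rw [bnResidual, abs_le]
  split_ifs <;> constructor <;> linarith

theorem sum_ite_cfgOf_eq (φ : BNIdx d Par → ℝ) (x : Fin d → Bool) :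
    ∑ k : BNIdx d Par, (if cfgOf Par x k.1 = k.2 then φ k else 0) = activeSum φ x := by
  rw [Fintype.sum_sigma]
  exact Finset.sum_congr rfl fun i _ => by simp [activeCfg]

theorem activeSum_le_sum {φ : BNIdx d Par → ℝ} (hφ : ∀ k, 0 ≤ φ k) (x : Fin d → Bool) :
    activeSum φ x ≤ ∑ k, φ k := by
  rw [← sum_ite_cfgOf_eq]
  gcongr with k
  split_ifs
  · exact le_rfl
  · exact hφ k

theorem sq_activeSum_mul_le (φ ψ : BNIdx d Par → ℝ) (x : Fin d → Bool) :
    activeSum (φ * ψ) x ^ 2 ≤ activeSum (φ ^ 2) x * activeSum (ψ ^ 2) x :=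
  Finset.sum_mul_sq_le_sq_mul_sq _ _ _

theorem expec_activeSum (R : (Fin d → Bool) → ℝ) (φ : BNIdx d Par → ℝ) :
    expec R (activeSum φ) = ∑ k, prCfg Par R k * φ k := by
  simp only [expec, prCfg, ← sum_ite_cfgOf_eq, Finset.mul_sum, Finset.sum_mul]
  rw [Finset.sum_comm]
  refine Finset.sum_congr rfl fun k _ => Finset.sum_congr rfl fun x _ => ?_
  rw [mul_ite, ite_mul, mul_zero, zero_mul]

theorem prCfg_eq_expec (R : (Fin d → Bool) → ℝ) (k : BNIdx d Par) :
    prCfg Par R k = expec R (fun x => if cfgOf Par x k.1 = k.2 then 1 else 0) := by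
  simp only [prCfg, expec, mul_ite, mul_one, mul_zero]

theorem prCfg_nonneg {R : (Fin d → Bool) → ℝ} (hR : ∀ x, 0 ≤ R x) (k : BNIdx d Par) :
    0 ≤ prCfg Par R k := by
  rw [prCfg_eq_expec]
  exact expec_nonneg hR fun x => by positivity

theorem prCfg_le_one {R : (Fin d → Bool) → ℝ} (hR : IsProbDist R) (k : BNIdx d Par) :
    prCfg Par R k ≤ 1 := by
  rw [prCfg_eq_expec]
  refine expec_le_of_le hR fun x => ?_
  split_ifs <;> norm_num

theorem Fvec_sub_apply (x : Fin d → Bool) (q : BNIdx d Par → ℝ) (k : BNIdx d Par) :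
    Fvec Par x q k - q k = if cfgOf Par x k.1 = k.2 then bnResidual Par q k.1 x else 0 := by
  obtain ⟨i, a⟩ := k
  by_cases hmatch : cfgOf Par x i = a
  · subst hmatch
    rw [Fvec, if_pos rfl, if_pos rfl]
    rfl
  · rw [Fvec, if_neg hmatch, if_neg hmatch, sub_self]

theorem abs_Fvec_sub_le_one {q : BNIdx d Par → ℝ} (hq : ∀ k, q k ∈ Set.Icc (0 : ℝ) 1)
    (x : Fin d → Bool) (k : BNIdx d Par) : |Fvec Par x q k - q k| ≤ 1 := by
  rw [Fvec_sub_apply]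
  split_ifs
  · exact abs_bnResidual_le_one hq _ _
  · simp

theorem linStat_eq_sum_active (u q : BNIdx d Par → ℝ) (x : Fin d → Bool) :
    linStat u q x = ∑ i, u (activeCfg Par x i) * bnResidual Par q i x := by
  simp only [linStat, Fvec_sub_apply, mul_ite, mul_zero]
  rw [Fintype.sum_sigma]
  exact Finset.sum_congr rfl fun i _ => by simp [activeCfg]

theorem diagStat_eq_sum_active (u q : BNIdx d Par → ℝ) (x : Fin d → Bool) :
    diagStat u q x = ∑ i, (u (activeCfg Par x i) * bnResidual Par q i x) ^ 2 := by
  simp only [diagStat, Fvec_sub_apply, mul_ite, mul_zero, ite_pow, zero_pow two_ne_zero]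
  rw [Fintype.sum_sigma]
  exact Finset.sum_congr rfl fun i _ => by simp [activeCfg]

theorem linStat_smul (t : ℝ) (u q : BNIdx d Par → ℝ) (x : Fin d → Bool) :
    linStat (t • u) q x = t * linStat u q x := by
  simp only [linStat, Finset.mul_sum, Pi.smul_apply, smul_eq_mul, mul_assoc]

theorem bnResidual_eq_add (p q : BNIdx d Par → ℝ) (i : Fin d) (x : Fin d → Bool) :
    bnResidual Par q i x = bnResidual Par p i x + (p - q) (activeCfg Par x i) := by
  rw [bnResidual, bnResidual, Pi.sub_apply]
  ring

theorem linStat_eq_add_activeSum (u p q : BNIdx d Par → ℝ) (x : Fin d → Bool) :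
    linStat u q x = linStat u p x + activeSum (u * (p - q)) x := by
  simp only [linStat_eq_sum_active, bnResidual_eq_add p q, mul_add, Finset.sum_add_distrib]
  rfl

theorem diagStat_nonneg (u q : BNIdx d Par → ℝ) (x : Fin d → Bool) : 0 ≤ diagStat u q x :=
  Finset.sum_nonneg fun _ _ => sq_nonneg _

theorem diagStat_le {q : BNIdx d Par → ℝ} (hq : ∀ k, q k ∈ Set.Icc (0 : ℝ) 1)
    (u : BNIdx d Par → ℝ) (x : Fin d → Bool) : diagStat u q x ≤ ∑ k, u k ^ 2 := by
  refine Finset.sum_le_sum fun k _ => ?_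
  rw [mul_pow]
  exact mul_le_of_le_one_right (sq_nonneg _)
    ((sq_le_one_iff_abs_le_one _).2 (abs_Fvec_sub_le_one hq x k))

section Moments

variable (hPar : ∀ i : Fin d, ∀ j ∈ Par i, j < i) (p : BNIdx d Par → ℝ)
include hPar

theorem expec_sum_bnResidual_mul (φ : BNIdx d Par → ℝ) :
    expec (bnDist Par p) (fun x => ∑ i, bnResidual Par p i x * φ (activeCfg Par x i)) = 0 := by
  rw [expec_sum]
  exact Finset.sum_eq_zero fun i _ =>
    expec_bnResidual_mul hPar p i fun _ _ hxy => congrArg φ (dependsOn_activeCfg hPar i hxy)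

theorem expec_linStat_self (u : BNIdx d Par → ℝ) : expec (bnDist Par p) (linStat u p) = 0 := by
  rw [← expec_sum_bnResidual_mul hPar p u]
  congr 1
  funext x
  simp only [linStat_eq_sum_active, mul_comm]

theorem expec_linStat (u q : BNIdx d Par → ℝ) :
    expec (bnDist Par p) (linStat u q) =
      ∑ k, u k * (prCfg Par (bnDist Par p) k * (p k - q k)) := by
  have hsplit : linStat u q = fun x => linStat u p x + activeSum (u * (p - q)) x :=
    funext (linStat_eq_add_activeSum u p q)
  rw [hsplit, expec_add, expec_linStat_self hPar, zero_add, expec_activeSum]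
  exact Finset.sum_congr rfl fun k _ => mul_left_comm _ _ _

theorem expec_bnResidual_mul_bnResidual (φ : BNIdx d Par → ℝ) {i j : Fin d} (hij : j ≠ i) :
    expec (bnDist Par p) (fun x => (φ (activeCfg Par x i) * bnResidual Par p i x) *
      (φ (activeCfg Par x j) * bnResidual Par p j x)) = 0 := by
  wlog hlt : j < i generalizing i j
  · simpa only [mul_comm] using this hij.symm (lt_of_le_of_ne (not_lt.1 hlt) hij.symm)
  have hdep : DependsOn (fun x => φ (activeCfg Par x i) *
      (φ (activeCfg Par x j) * bnResidual Par p j x)) (Set.Iio i) := by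
    intro x y hxy
    have hxy' : ∀ k ∈ Set.Iic j, x k = y k := fun k hk => hxy k (lt_of_le_of_lt hk hlt)
    have hi : activeCfg Par x i = activeCfg Par y i := dependsOn_activeCfg hPar i hxy
    have hj : activeCfg Par x j = activeCfg Par y j :=
      dependsOn_activeCfg hPar j fun k hk => hxy' k (Set.Iio_subset_Iic_self hk)
    simp only [hi, hj, dependsOn_bnResidual hPar p j hxy']
  rw [← expec_bnResidual_mul hPar p i hdep]
  congr 1
  funext x
  ring

theorem expec_linStat_sq_self (u : BNIdx d Par → ℝ) :
    expec (bnDist Par p) (fun x => linStat u p x ^ 2) = expec (bnDist Par p) (diagStat u p) := by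
  have hdiag : diagStat u p =
      fun x => ∑ i, (u (activeCfg Par x i) * bnResidual Par p i x) ^ 2 :=
    funext (diagStat_eq_sum_active u p)
  simp only [hdiag, linStat_eq_sum_active, sq, Finset.sum_mul_sum, expec_sum]
  exact Finset.sum_congr rfl fun i _ => Finset.sum_eq_single i
    (fun j _ hji => expec_bnResidual_mul_bnResidual hPar p u hji)
    fun hi => absurd (Finset.mem_univ i) hi

variable {p} (hp : ∀ k, p k ∈ Set.Icc (0 : ℝ) 1)
include hp

theorem sum_condProb_mul_exp_update_le (u : BNIdx d Par → ℝ) (i : Fin d) (x : Fin d → Bool) :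
    ∑ b, condProb Par p i (Function.update x i b) *
      Real.exp (u (activeCfg Par x i) * bnResidual Par p i (Function.update x i b)) ≤
        Real.exp (∑ a, u ⟨i, a⟩ ^ 2) := by
  refine (sum_mul_exp_le_exp_sq
    ⟨fun b => condProb_nonneg hp i _, sum_condProb_update hPar p i x⟩
    (sum_condProb_mul_bnResidual_update hPar p i x)
    (fun b => abs_bnResidual_le_one hp i _) _).trans (Real.exp_le_exp.2 ?_)
  exact Finset.single_le_sum (f := fun a => u ⟨i, a⟩ ^ 2) (fun a _ => sq_nonneg _)
    (Finset.mem_univ (cfgOf Par x i))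

theorem expec_exp_linStat_le (u : BNIdx d Par → ℝ) :
    expec (bnDist Par p) (fun x => Real.exp (linStat u p x)) ≤ Real.exp (∑ k, u k ^ 2) := by
  let f : Fin d → (Fin d → Bool) → ℝ := fun i x =>
    condProb Par p i x * Real.exp (u (activeCfg Par x i) * bnResidual Par p i x)
  have hf (i : Fin d) : DependsOn (f i) (Set.Iic i) := by
    intro x y hxy
    have hcfg : activeCfg Par x i = activeCfg Par y i :=
      dependsOn_activeCfg hPar i fun j hj => hxy j (Set.Iio_subset_Iic_self hj)
    simp only [f, hcfg, dependsOn_condProb hPar p i hxy, dependsOn_bnResidual hPar p i hxy]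
  calc expec (bnDist Par p) (fun x => Real.exp (linStat u p x))
      = ∑ x, ∏ i, f i x := by
        refine Finset.sum_congr rfl fun x _ => ?_
        simp only [f, linStat_eq_sum_active, Real.exp_sum, bnDist_eq_prod_condProb,
          ← Finset.prod_mul_distrib]
    _ ≤ ∏ i, Real.exp (∑ a, u ⟨i, a⟩ ^ 2) := by
        refine sum_prod_le_prod_of_sum_update_le
          (fun i x => mul_nonneg (condProb_nonneg hp i x) (Real.exp_nonneg _)) hf fun i x => ?_
        simpa only [f, activeCfg_update hPar] using sum_condProb_mul_exp_update_le hPar hp u i x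
    _ = Real.exp (∑ k, u k ^ 2) := by rw [← Real.exp_sum, ← Fintype.sum_sigma']

theorem expec_cosh_linStat_le {u : BNIdx d Par → ℝ} (hu : ∑ k, u k ^ 2 ≤ 1) (s : ℝ) :
    expec (bnDist Par p) (fun x => Real.cosh (s * linStat u p x)) ≤ Real.exp (s ^ 2) := by
  have hexp (t : ℝ) (ht : t ^ 2 = s ^ 2) :
      expec (bnDist Par p) (fun x => Real.exp (t * linStat u p x)) ≤ Real.exp (s ^ 2) := by
    simp only [← linStat_smul]
    refine (expec_exp_linStat_le hPar hp _).trans (Real.exp_le_exp.2 ?_)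
    simp only [Pi.smul_apply, smul_eq_mul, mul_pow, ht, ← Finset.mul_sum]
    exact mul_le_of_le_one_right (sq_nonneg s) hu
  calc expec (bnDist Par p) (fun x => Real.cosh (s * linStat u p x))
      = (1 / 2) * (expec (bnDist Par p) (fun x => Real.exp (s * linStat u p x)) +
          expec (bnDist Par p) (fun x => Real.exp (-s * linStat u p x))) := by
        rw [← expec_add, ← expec_const_mul]
        congr 1
        funext x
        rw [Real.cosh_eq, neg_mul]
        ring
    _ ≤ Real.exp (s ^ 2) := by linarith [hexp s rfl, hexp (-s) (neg_sq s)]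

end Moments

section BiasTerm

theorem sq_activeSum_mul_le_of_sum_sq_le_one {u : BNIdx d Par → ℝ} (hu : ∑ k, u k ^ 2 ≤ 1)
    (δ : BNIdx d Par → ℝ) (x : Fin d → Bool) :
    activeSum (u * δ) x ^ 2 ≤ activeSum (δ ^ 2) x := by
  have hu_x : activeSum (u ^ 2) x ≤ 1 := (activeSum_le_sum (fun k => sq_nonneg (u k)) x).trans hu
  exact (sq_activeSum_mul_le u δ x).trans
    (mul_le_of_le_one_left (Finset.sum_nonneg fun _ _ => sq_nonneg _) hu_x)

theorem activeSum_mul_sq_le {u : BNIdx d Par → ℝ} (hu : ∑ k, u k ^ 2 ≤ 1)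
    (δ : BNIdx d Par → ℝ) (x : Fin d → Bool) :
    activeSum ((u * δ) ^ 2) x ≤ activeSum (δ ^ 2) x := by
  refine Finset.sum_le_sum fun i _ => ?_
  rw [mul_pow, Pi.mul_apply]
  refine mul_le_of_le_one_left (sq_nonneg _) (le_trans ?_ hu)
  exact Finset.single_le_sum (f := fun k => u k ^ 2) (fun k _ => sq_nonneg _) (Finset.mem_univ _)

theorem diagStat_eq_add (u p q : BNIdx d Par → ℝ) (x : Fin d → Bool) :
    diagStat u q x = diagStat u p x +
      ∑ i, bnResidual Par p i x * ((2 : ℝ) • (u ^ 2 * (p - q))) (activeCfg Par x i) +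
      activeSum ((u * (p - q)) ^ 2) x := by
  rw [diagStat_eq_sum_active, diagStat_eq_sum_active, activeSum, ← Finset.sum_add_distrib,
    ← Finset.sum_add_distrib]
  refine Finset.sum_congr rfl fun i _ => ?_
  rw [bnResidual_eq_add p q]
  simp only [Pi.mul_apply, Pi.pow_apply, Pi.smul_apply, smul_eq_mul]
  ring

variable (hPar : ∀ i : Fin d, ∀ j ∈ Par i, j < i) {p u : BNIdx d Par → ℝ}
  (hp : ∀ k, p k ∈ Set.Icc (0 : ℝ) 1) (hu : ∑ k, u k ^ 2 ≤ 1) (q : BNIdx d Par → ℝ)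
include hPar hp hu

theorem expec_diagStat_le :
    expec (bnDist Par p) (diagStat u q) ≤ expec (bnDist Par p) (diagStat u p) +
      ∑ k, prCfg Par (bnDist Par p) k * (p k - q k) ^ 2 := by
  have hsplit : diagStat u q = _ := funext (diagStat_eq_add u p q)
  rw [hsplit, expec_add, expec_add, expec_sum_bnResidual_mul hPar, add_zero]
  refine add_le_add_right ?_ _
  exact (expec_mono (isProbDist_bnDist hPar hp).1 (activeSum_mul_sq_le hu _)).trans_eq
    (expec_activeSum _ _)

theorem le_expec_linStat_sq {D : ℝ} (hD : 0 ≤ D)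
    (hpq : ∑ k, prCfg Par (bnDist Par p) k * (p k - q k) ^ 2 ≤ D ^ 2) :
    expec (bnDist Par p) (diagStat u p) - 2 * D ≤
      expec (bnDist Par p) (fun x => linStat u q x ^ 2) := by
  set P := bnDist Par p
  set b : (Fin d → Bool) → ℝ := activeSum (u * (p - q))
  have hP : IsProbDist P := isProbDist_bnDist hPar hp
  have hb₀ : 0 ≤ expec P (fun x => b x ^ 2) := expec_nonneg hP.1 fun _ => sq_nonneg _
  have hb : expec P (fun x => b x ^ 2) ≤ D ^ 2 := by
    refine (expec_mono hP.1 (sq_activeSum_mul_le_of_sum_sq_le_one hu (p - q))).trans ?_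
    rw [expec_activeSum]
    exact hpq
  have hlin : expec P (fun x => linStat u p x ^ 2) ≤ 1 := by
    rw [expec_linStat_sq_self hPar]
    exact expec_le_of_le hP fun x => (diagStat_le hp u x).trans hu
  have hcross : |expec P (fun x => linStat u p x * b x)| ≤ D := by
    refine abs_le_of_sq_le_sq ((sq_expec_mul_le hP.1 _ _).trans ?_) hD
    simpa only [one_mul] using mul_le_mul hlin hb hb₀ zero_le_one
  have hexpand : expec P (fun x => linStat u q x ^ 2) = expec P (diagStat u p) +
      2 * expec P (fun x => linStat u p x * b x) + expec P (fun x => b x ^ 2) := by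
    rw [← expec_linStat_sq_self hPar, ← expec_const_mul, ← expec_add, ← expec_add]
    congr 1
    funext x
    rw [linStat_eq_add_activeSum u p q]
    ring
  linarith [(abs_le.1 hcross).1]

theorem expec_diagStat_sub_expec_linStat_sq_le {D : ℝ} (hD : 0 ≤ D)
    (hpq : ∑ k, prCfg Par (bnDist Par p) k * (p k - q k) ^ 2 ≤ D ^ 2) :
    expec (bnDist Par p) (diagStat u q) - expec (bnDist Par p) (fun x => linStat u q x ^ 2) ≤
      2 * D + D ^ 2 := by
  linarith [expec_diagStat_le hPar hp hu q, le_expec_linStat_sq hPar hp hu q hD hpq]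

end BiasTerm

section QuadraticForm

theorem covM0_eq_sub_diagonal (R : (Fin d → Bool) → ℝ) (q : BNIdx d Par → ℝ) :
    covM0 Par R q = covM Par R q - Matrix.diagonal (covM Par R q).diag := by
  ext k l
  rw [covM0, Matrix.sub_apply, Matrix.diagonal_apply]
  split_ifs with hkl
  · rw [hkl, Matrix.diag_apply, sub_self]
  · rw [sub_zero]

theorem expec_coord_mul_coord (R : (Fin d → Bool) → ℝ) (u q : BNIdx d Par → ℝ)
    (k l : BNIdx d Par) :
    expec R (fun x => u k * (Fvec Par x q k - q k) * (u l * (Fvec Par x q l - q l))) =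
      u k * (covM Par R q k l * u l) := by
  calc expec R (fun x => u k * (Fvec Par x q k - q k) * (u l * (Fvec Par x q l - q l)))
      = expec R (fun x =>
          u k * u l * ((Fvec Par x q k - q k) * (Fvec Par x q l - q l))) := by
        congr 1
        funext x
        ring
    _ = u k * (covM Par R q k l * u l) := by
        rw [expec_const_mul, mul_assoc, mul_comm (u l)]
        rfl

theorem expec_linStat_sq (R : (Fin d → Bool) → ℝ) (u q : BNIdx d Par → ℝ) :
    expec R (fun x => linStat u q x ^ 2) = u ⬝ᵥ (covM Par R q).mulVec u := by
  simp only [linStat, sq, Finset.sum_mul_sum, expec_sum, expec_coord_mul_coord, dotProduct,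
    Matrix.mulVec]
  simp only [Finset.mul_sum]

theorem expec_diagStat (R : (Fin d → Bool) → ℝ) (u q : BNIdx d Par → ℝ) :
    expec R (diagStat u q) = u ⬝ᵥ (Matrix.diagonal (covM Par R q).diag).mulVec u := by
  have hdiag : diagStat u q = fun x =>
      ∑ k, u k * (Fvec Par x q k - q k) * (u k * (Fvec Par x q k - q k)) :=
    funext fun x => by simp only [diagStat, sq]
  simp only [hdiag, expec_sum, expec_coord_mul_coord, dotProduct, Matrix.mulVec_diagonal,
    Matrix.diag_apply]

theorem expec_linStat_sq_sub_expec_diagStat_le (R : (Fin d → Bool) → ℝ) {u : BNIdx d Par → ℝ}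
    (hu : ∑ k, u k ^ 2 ≤ 1) (q : BNIdx d Par → ℝ) :
    expec R (fun x => linStat u q x ^ 2) - expec R (diagStat u q) ≤ specNorm (covM0 Par R q) := by
  rw [expec_linStat_sq, expec_diagStat, ← dotProduct_sub, ← Matrix.sub_mulVec,
    ← covM0_eq_sub_diagonal]
  exact dotProduct_mulVec_le_specNorm _ hu

end QuadraticForm

section KullbackLeibler

/-- The `χ²`-divergence of the Bernoulli distribution with mean `a` from that with mean `b`. -/
noncomputable def bernoulliChiSq (a b : ℝ) : ℝ := (a - b) ^ 2 / (b * (1 - b))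

theorem condProb_pos {p : BNIdx d Par → ℝ} (hp : ∀ k, p k ∈ Set.Ioo (0 : ℝ) 1) (i : Fin d)
    (x : Fin d → Bool) : 0 < condProb Par p i x := by
  rw [condProb]
  split_ifs
  · exact (hp _).1
  · exact sub_pos.2 (hp _).2

theorem bnDist_pos {p : BNIdx d Par → ℝ} (hp : ∀ k, p k ∈ Set.Ioo (0 : ℝ) 1)
    (x : Fin d → Bool) : 0 < bnDist Par p x :=
  Finset.prod_pos fun i _ => condProb_pos hp i x

theorem condProb_div_condProb {q : BNIdx d Par → ℝ} (hq : ∀ k, q k ∈ Set.Ioo (0 : ℝ) 1)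
    (p : BNIdx d Par → ℝ) (i : Fin d) (x : Fin d → Bool) :
    condProb Par p i x / condProb Par q i x = 1 +
      bnResidual Par p i x * ((p - q) / (q * (1 - q))) (activeCfg Par x i) +
      bernoulliChiSq (p (activeCfg Par x i)) (q (activeCfg Par x i)) := by
  have hq₀ := (hq (activeCfg Par x i)).1.ne'
  have hq₁ := (sub_pos.2 (hq (activeCfg Par x i)).2).ne'
  simp only [condProb, bnResidual, bernoulliChiSq, Pi.div_apply, Pi.mul_apply, Pi.sub_apply,
    Pi.one_apply]
  split_ifs <;> field_simp <;> ring

theorem log_bnDist_div_bnDist_le {p q : BNIdx d Par → ℝ} (hp : ∀ k, p k ∈ Set.Ioo (0 : ℝ) 1)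
    (hq : ∀ k, q k ∈ Set.Ioo (0 : ℝ) 1) (x : Fin d → Bool) :
    Real.log (bnDist Par p x / bnDist Par q x) ≤
      ∑ i, bnResidual Par p i x * ((p - q) / (q * (1 - q))) (activeCfg Par x i) +
      activeSum (fun k => bernoulliChiSq (p k) (q k)) x := by
  have hpos (i : Fin d) : 0 < condProb Par p i x / condProb Par q i x :=
    div_pos (condProb_pos hp i x) (condProb_pos hq i x)
  rw [bnDist_eq_prod_condProb, bnDist_eq_prod_condProb, ← Finset.prod_div_distrib,
    Real.log_prod fun i _ => (hpos i).ne', activeSum, ← Finset.sum_add_distrib]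
  refine Finset.sum_le_sum fun i _ => (Real.log_le_sub_one_of_pos (hpos i)).trans_eq ?_
  rw [condProb_div_condProb hq]
  ring

variable (hPar : ∀ i : Fin d, ∀ j ∈ Par i, j < i)
include hPar

theorem dTV_bnDist_sq_le {p q : BNIdx d Par → ℝ} (hp : ∀ k, p k ∈ Set.Ioo (0 : ℝ) 1)
    (hq : ∀ k, q k ∈ Set.Ioo (0 : ℝ) 1) :
    dTV (bnDist Par p) (bnDist Par q) ^ 2 ≤
      ∑ k, prCfg Par (bnDist Par p) k * bernoulliChiSq (p k) (q k) := by
  have hP : IsProbDist (bnDist Par p) :=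
    isProbDist_bnDist hPar fun k => Set.Ioo_subset_Icc_self (hp k)
  have hQ : IsProbDist (bnDist Par q) :=
    isProbDist_bnDist hPar fun k => Set.Ioo_subset_Icc_self (hq k)
  calc dTV (bnDist Par p) (bnDist Par q) ^ 2
      ≤ 2 * hellingerSq (bnDist Par p) (bnDist Par q) := dTV_sq_le_two_mul_hellingerSq hP hQ
    _ ≤ expec (bnDist Par p) (fun x => Real.log (bnDist Par p x / bnDist Par q x)) :=
        two_mul_hellingerSq_le_sum_mul_log (bnDist_pos hp) hP.2 (bnDist_pos hq)
    _ ≤ _ := expec_mono hP.1 (log_bnDist_div_bnDist_le hp hq)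
    _ = expec (bnDist Par p) (activeSum fun k => bernoulliChiSq (p k) (q k)) := by
        rw [expec_add, expec_sum_bnResidual_mul hPar, zero_add]
    _ = ∑ k, prCfg Par (bnDist Par p) k * bernoulliChiSq (p k) (q k) := expec_activeSum _ _

theorem dTV_bnDist_le {p q : BNIdx d Par → ℝ} {c D : ℝ} (hc : 0 < c)
    (hp : ∀ k, p k ∈ Set.Icc (2 * c) (1 - 2 * c)) (hpq : ∀ k, |p k - q k| ≤ c) (hD : 0 ≤ D)
    (hD₂ : ∑ k, prCfg Par (bnDist Par p) k * (p k - q k) ^ 2 ≤ D ^ 2) :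
    dTV (bnDist Par p) (bnDist Par q) ≤ D / c := by
  have hq (k : BNIdx d Par) : q k ∈ Set.Icc c (1 - c) := by
    obtain ⟨hlower, hupper⟩ := abs_le.1 (hpq k)
    exact ⟨by linarith [(hp k).1], by linarith [(hp k).2]⟩
  have hp' : ∀ k, p k ∈ Set.Ioo (0 : ℝ) 1 := fun k =>
    ⟨by linarith [(hp k).1], by linarith [(hp k).2]⟩
  have hq' : ∀ k, q k ∈ Set.Ioo (0 : ℝ) 1 := fun k =>
    ⟨by linarith [(hq k).1], by linarith [(hq k).2]⟩
  have hP := isProbDist_bnDist hPar fun k => Set.Ioo_subset_Icc_self (hp' k)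
  have hterm (k : BNIdx d Par) :
      bernoulliChiSq (p k) (q k) ≤ (p k - q k) ^ 2 / c ^ 2 := by
    have : c ^ 2 ≤ q k * (1 - q k) := by nlinarith [(hq k).1, (hq k).2]
    rw [bernoulliChiSq]
    gcongr
  refine (le_abs_self _).trans (abs_le_of_sq_le_sq ?_ (by positivity))
  calc dTV (bnDist Par p) (bnDist Par q) ^ 2
      ≤ ∑ k, prCfg Par (bnDist Par p) k * bernoulliChiSq (p k) (q k) :=
        dTV_bnDist_sq_le hPar hp' hq'
    _ ≤ ∑ k, prCfg Par (bnDist Par p) k * ((p k - q k) ^ 2 / c ^ 2) :=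
        Finset.sum_le_sum fun k _ => mul_le_mul_of_nonneg_left (hterm k) (prCfg_nonneg hP.1 k)
    _ = (∑ k, prCfg Par (bnDist Par p) k * (p k - q k) ^ 2) / c ^ 2 := by
        simp only [Finset.sum_div, mul_div_assoc]
    _ ≤ (D / c) ^ 2 := by
        rw [div_pow]
        gcongr

end KullbackLeibler

section Stability

/-- The `ℓ²` distance between the tables `p` and `q`, each entry being weighted by the probability
of its parental configuration under `P_p`. -/
noncomputable def tableDist (p q : BNIdx d Par → ℝ) : ℝ :=
  √(∑ k, prCfg Par (bnDist Par p) k * (p k - q k) ^ 2)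

theorem tableDist_nonneg (p q : BNIdx d Par → ℝ) : 0 ≤ tableDist p q := Real.sqrt_nonneg _

theorem abs_expec_linStat_le_enorm2 {R : (Fin d → Bool) → ℝ} (hR : IsProbDist R)
    {u : BNIdx d Par → ℝ} (hu : ∑ k, u k ^ 2 ≤ 1) (q : BNIdx d Par → ℝ) :
    |expec R (linStat u q)| ≤ enorm2 (fun k => q k - expec R (fun x => Fvec Par x q k)) := by
  have hmean : expec R (linStat u q) =
      -∑ k, u k * (q k - expec R (fun x => Fvec Par x q k)) := by
    have hlin : linStat u q = fun x => ∑ k, u k * (Fvec Par x q k + -q k) := rfl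
    simp only [hlin, expec_sum, expec_const_mul, expec_add, expec_const hR,
      ← Finset.sum_neg_distrib]
    exact Finset.sum_congr rfl fun k _ => by ring
  rw [hmean, abs_neg]
  refine Real.abs_le_sqrt ((Finset.sum_mul_sq_le_sq_mul_sq _ _ _).trans ?_)
  exact mul_le_of_le_one_left (Finset.sum_nonneg fun _ _ => sq_nonneg _) hu

variable {p q : BNIdx d Par → ℝ} {ε β wP wE wL : ℝ} {R E L : (Fin d → Bool) → ℝ}
  (hPar : ∀ i : Fin d, ∀ j ∈ Par i, j < i)

include hPar in
theorem exists_sqrt_mul_tableDist_le_expec_linStat (hβ₀ : 0 ≤ β)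
    (hβ : ∀ k, β ≤ prCfg Par (bnDist Par p) k) (q : BNIdx d Par → ℝ) :
    ∃ u : BNIdx d Par → ℝ, ∑ k, u k ^ 2 ≤ 1 ∧
      √β * tableDist p q ≤ expec (bnDist Par p) (linStat u q) := by
  obtain ⟨u, hu, huv⟩ := exists_sum_mul_eq_enorm2 fun k =>
    prCfg Par (bnDist Par p) k * (p k - q k)
  refine ⟨u, hu, ?_⟩
  rw [expec_linStat hPar, huv, enorm2, tableDist, ← Real.sqrt_mul hβ₀, Finset.mul_sum]
  refine Real.sqrt_le_sqrt (Finset.sum_le_sum fun k _ => ?_)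
  have hk := mul_le_mul_of_nonneg_right (hβ k) (hβ₀.trans (hβ k))
  calc β * (prCfg Par (bnDist Par p) k * (p k - q k) ^ 2)
      = β * prCfg Par (bnDist Par p) k * (p k - q k) ^ 2 := by ring
    _ ≤ prCfg Par (bnDist Par p) k * prCfg Par (bnDist Par p) k * (p k - q k) ^ 2 :=
        mul_le_mul_of_nonneg_right hk (sq_nonneg _)
    _ = (prCfg Par (bnDist Par p) k * (p k - q k)) ^ 2 := by ring

section Table

variable (hp : ∀ k, p k ∈ Set.Icc (0 : ℝ) 1)
include hPar hp

theorem sq_tableDist (q : BNIdx d Par → ℝ) :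
    tableDist p q ^ 2 = ∑ k, prCfg Par (bnDist Par p) k * (p k - q k) ^ 2 :=
  Real.sq_sqrt <| Finset.sum_nonneg fun k _ =>
    mul_nonneg (prCfg_nonneg (isProbDist_bnDist hPar hp).1 k) (sq_nonneg _)

theorem sum_sq_sub_le_sq_tableDist_div (hβ₀ : 0 < β)
    (hβ : ∀ k, β ≤ prCfg Par (bnDist Par p) k) (q : BNIdx d Par → ℝ) :
    ∑ k, (p k - q k) ^ 2 ≤ tableDist p q ^ 2 / β := by
  rw [le_div_iff₀ hβ₀, sq_tableDist hPar hp, Finset.sum_mul]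
  refine Finset.sum_le_sum fun k _ => ?_
  rw [mul_comm]
  exact mul_le_mul_of_nonneg_right (hβ k) (sq_nonneg _)

end Table

variable (hN : NoiseModel ε (bnDist Par p) R E L wP wE wL)
include hN

theorem le_prCfg_of_le_prCfg (hwP : 0 ≤ wP) {k : BNIdx d Par}
    (hβ : β ≤ prCfg Par (bnDist Par p) k) : wP * β - 2 * ε ≤ prCfg Par R k := by
  have hind := hN.abs_expec_sub_le (g := fun x => if cfgOf Par x k.1 = k.2 then 1 else 0)
    fun x => by split_ifs <;> simp
  rw [← prCfg_eq_expec, ← prCfg_eq_expec] at hind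
  linarith [(abs_le.1 hind).1, mul_le_mul_of_nonneg_left hβ hwP]

theorem half_iInf_prCfg_add_le [Nonempty (BNIdx d Par)] (hε : 0 ≤ ε)
    (hmin : 2000 * ε ≤ ⨅ k, prCfg Par (bnDist Par p) k) :
    (⨅ k, prCfg Par (bnDist Par p) k) / 2 + ε ≤ ⨅ k, prCfg Par R k := by
  refine le_ciInf fun k => ?_
  have hβ := ciInf_le (Set.finite_range (prCfg Par (bnDist Par p))).bddBelow k
  have hε₁ : 2000 * ε ≤ 1 := hmin.trans (hβ.trans (prCfg_le_one hN.isProbDist_P k))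
  have hwP : 0.9 ≤ wP := by linarith [hN.one_sub_le_wP]
  refine le_trans ?_ (le_prCfg_of_le_prCfg hN (by linarith) hβ)
  nlinarith

include hPar

theorem wP_mul_prCfg_mul_abs_sub_le (hwP : 0 ≤ wP) (hq : ∀ k, q k ∈ Set.Icc (0 : ℝ) 1)
    (hmean : enorm2 (fun k => q k - expec R (fun x => Fvec Par x q k)) ≤ ε)
    (k : BNIdx d Par) : wP * (prCfg Par (bnDist Par p) k * |p k - q k|) ≤ 3 * ε := by
  have hlin : linStat (Pi.single k 1) q = fun x => Fvec Par x q k - q k := by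
    funext x
    simp [linStat, Pi.single_apply]
  have hu : ∑ l, (Pi.single k 1 : BNIdx d Par → ℝ) l ^ 2 ≤ 1 := by
    simp [Pi.single_apply]
  have hP : expec (bnDist Par p) (linStat (Pi.single k 1) q) =
      prCfg Par (bnDist Par p) k * (p k - q k) := by
    rw [expec_linStat hPar]
    simp [Pi.single_apply]
  have hR := (abs_expec_linStat_le_enorm2 hN.isProbDist_R hu q).trans hmean
  have hRP : |expec R (linStat (Pi.single k 1) q) -
      wP * expec (bnDist Par p) (linStat (Pi.single k 1) q)| ≤ 2 * ε :=
    hN.abs_expec_sub_le fun x => by simpa only [hlin] using abs_Fvec_sub_le_one hq x k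
  calc wP * (prCfg Par (bnDist Par p) k * |p k - q k|)
      = |wP * expec (bnDist Par p) (linStat (Pi.single k 1) q)| := by
        rw [hP, abs_mul, abs_mul, abs_of_nonneg hwP,
          abs_of_nonneg (prCfg_nonneg hN.isProbDist_P.1 k)]
    _ ≤ 3 * ε := by
        rw [abs_le] at hR hRP ⊢
        constructor <;> linarith [hR.1, hR.2, hRP.1, hRP.2]

variable (hp : ∀ k, p k ∈ Set.Icc (0 : ℝ) 1) (hε : 0 < ε) (hl : 1 ≤ Real.log (1 / ε))
include hp hε hl

theorem wL_mul_expec_linStat_sq_le (hε₁ : ε ≤ 1 / 2) {u : BNIdx d Par → ℝ}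
    (hu : ∑ k, u k ^ 2 ≤ 1) (q : BNIdx d Par → ℝ) :
    wL * expec L (fun x => linStat u q x ^ 2) ≤
      48 * ε * Real.log (1 / ε) + 4 * ε * ∑ k, (p k - q k) ^ 2 := by
  have hpt (x : Fin d → Bool) :
      linStat u q x ^ 2 ≤ 2 * linStat u p x ^ 2 + 2 * ∑ k, (p k - q k) ^ 2 := by
    rw [linStat_eq_add_activeSum u p q, ← mul_add]
    refine add_sq_le.trans ?_
    gcongr
    exact (sq_activeSum_mul_le_of_sum_sq_le_one hu (p - q) x).trans
      (activeSum_le_sum (fun k => sq_nonneg _) x)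
  have hcosh : expec (bnDist Par p)
      (fun x => Real.cosh (√(Real.log (1 / ε)) * linStat u p x)) ≤ 1 / ε := by
    refine (expec_cosh_linStat_le hPar hp hu _).trans_eq ?_
    rw [Real.sq_sqrt (by linarith), Real.exp_log (one_div_pos.2 hε)]
  have hLp := hN.wL_mul_expec_sq_le hε hε₁ hl hcosh
  have hsum : 0 ≤ ∑ k, (p k - q k) ^ 2 := Finset.sum_nonneg fun _ _ => sq_nonneg _
  calc wL * expec L (fun x => linStat u q x ^ 2)
      ≤ wL * expec L (fun x => 2 * linStat u p x ^ 2 + 2 * ∑ k, (p k - q k) ^ 2) :=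
        mul_le_mul_of_nonneg_left (expec_mono hN.isProbDist_L.1 hpt) hN.wL_nonneg
    _ = 2 * (wL * expec L (fun x => linStat u p x ^ 2)) + 2 * wL * ∑ k, (p k - q k) ^ 2 := by
        rw [expec_add, expec_const_mul, expec_const hN.isProbDist_L]
        ring
    _ ≤ 48 * ε * Real.log (1 / ε) + 4 * ε * ∑ k, (p k - q k) ^ 2 := by
        nlinarith [mul_le_mul_of_nonneg_right hN.wL_le hsum]

omit hε hl in
theorem wE_mul_expec_linStat_sq_le (hwP : 0 ≤ wP) (hq : ∀ k, q k ∈ Set.Icc (0 : ℝ) 1)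
    {K : ℝ} (hK : specNorm (covM0 Par R q) ≤ K) {u : BNIdx d Par → ℝ}
    (hu : ∑ k, u k ^ 2 ≤ 1) :
    wE * expec E (fun x => linStat u q x ^ 2) ≤
      K + 2 * ε + wP * (2 * tableDist p q + tableDist p q ^ 2) +
        wL * expec L (fun x => linStat u q x ^ 2) := by
  have hoff := (expec_linStat_sq_sub_expec_diagStat_le R hu q).trans hK
  have hP := mul_le_mul_of_nonneg_left (expec_diagStat_sub_expec_linStat_sq_le hPar hp hu q
    (tableDist_nonneg p q) (sq_tableDist hPar hp q).ge) hwP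
  have hdiagE : wE * expec E (diagStat u q) ≤ 2 * ε :=
    (mul_le_of_le_one_right hN.wE_nonneg
      (expec_le_of_le hN.isProbDist_E fun x => (diagStat_le hq u x).trans hu)).trans hN.wE_le
  have hdiagL : 0 ≤ wL * expec L (diagStat u q) :=
    mul_nonneg hN.wL_nonneg (expec_nonneg hN.isProbDist_L.1 fun x => diagStat_nonneg u q x)
  rw [hN.expec_eq, hN.expec_eq (diagStat u q)] at hoff
  linarith

theorem wP_mul_expec_linStat_le (hε₁ : ε ≤ 1 / 2) (hq : ∀ k, q k ∈ Set.Icc (0 : ℝ) 1)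
    (hmean : enorm2 (fun k => q k - expec R (fun x => Fvec Par x q k)) ≤ ε)
    {K : ℝ} (hK : specNorm (covM0 Par R q) ≤ K) {u : BNIdx d Par → ℝ}
    (hu : ∑ k, u k ^ 2 ≤ 1) {Y : ℝ}
    (hY : 48 * ε * Real.log (1 / ε) + 4 * ε * ∑ k, (p k - q k) ^ 2 ≤ Y) :
    wP * expec (bnDist Par p) (linStat u q) ≤
      ε + √(2 * ε * (K + 2 * ε + 2 * (2 * tableDist p q + tableDist p q ^ 2) + Y)) +
        √(2 * ε * Y) := by
  have hwP : 0 ≤ wP := by linarith [hN.one_sub_le_wP]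
  have hwP₂ : wP ≤ 2 := by linarith [hN.wP_le_one_add]
  have hD := tableDist_nonneg p q
  have hLsq := (wL_mul_expec_linStat_sq_le hPar hN hp hε hl hε₁ hu q).trans hY
  have hEsq : wE * expec E (fun x => linStat u q x ^ 2) ≤
      K + 2 * ε + 2 * (2 * tableDist p q + tableDist p q ^ 2) + Y :=
    (wE_mul_expec_linStat_sq_le hPar hN hp hwP hq hK hu).trans (by gcongr)
  have hR := (abs_le.1 ((abs_expec_linStat_le_enorm2 hN.isProbDist_R hu q).trans hmean)).2
  have hE := abs_mul_expec_le_sqrt hN.isProbDist_E hN.wE_nonneg hN.wE_le hEsq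
  have hL := abs_mul_expec_le_sqrt hN.isProbDist_L hN.wL_nonneg hN.wL_le hLsq
  rw [hN.expec_eq] at hR
  linarith [(abs_le.1 hE).1, (abs_le.1 hL).2]

theorem sqrt_mul_tableDist_le (hεβ : 2000 * ε ≤ β) (hβ₁ : β ≤ 1)
    (hβ : ∀ k, β ≤ prCfg Par (bnDist Par p) k) (hq : ∀ k, q k ∈ Set.Icc (0 : ℝ) 1)
    (hmean : enorm2 (fun k => q k - expec R (fun x => Fvec Par x q k)) ≤ ε)
    {K : ℝ} (hK : specNorm (covM0 Par R q) ≤ K) :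
    √β * tableDist p q ≤ 3 * √(ε * K) + 63 * (ε * √(Real.log (1 / ε)) / √β) := by
  have hβ₀ : 0 < β := by linarith
  have hD := tableDist_nonneg p q
  obtain ⟨u, hu, hDu⟩ := exists_sqrt_mul_tableDist_le_expec_linStat hPar hβ₀.le hβ q
  have hY : 48 * ε * Real.log (1 / ε) + 4 * ε * ∑ k, (p k - q k) ^ 2 ≤
      48 * ε * Real.log (1 / ε) + 4 * ε * (tableDist p q ^ 2 / β) := by
    gcongr
    exact sum_sq_sub_le_sq_tableDist_div hPar hp hβ₀ hβ q
  refine sqrt_mul_le_of_mul_sqrt_mul_le hε.le hεβ hβ₀ hβ₁ hl hD ((specNorm_nonneg _).trans hK)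
    (le_trans ?_ (wP_mul_expec_linStat_le hPar hN hp hε hl (by linarith) hq hmean hK hu hY))
  exact mul_le_mul (by linarith [hN.one_sub_le_wP]) hDu (by positivity)
    (by linarith [hN.one_sub_le_wP])

omit hp in
theorem dTV_bnDist_le_of_specNorm_covM0_le {c : ℝ} (hc : c ∈ Set.Ioc (0 : ℝ) (1 / 2))
    (hp : ∀ k, p k ∈ Set.Icc c (1 - c)) (hεβ : 1000 / c * ε ≤ β) (hβ₁ : β ≤ 1)
    (hβ : ∀ k, β ≤ prCfg Par (bnDist Par p) k) (hq : ∀ k, q k ∈ Set.Icc (0 : ℝ) 1)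
    (hmean : enorm2 (fun k => q k - expec R (fun x => Fvec Par x q k)) ≤ ε)
    {K : ℝ} (hK : specNorm (covM0 Par R q) ≤ K) :
    dTV (bnDist Par p) (bnDist Par q) ≤
      (3 * √(ε * K) + 63 * (ε * √(Real.log (1 / ε)) / √β)) / (√β * (c / 2)) := by
  obtain ⟨hc₀, hc₁⟩ := hc
  have hp₀ (k : BNIdx d Par) : p k ∈ Set.Icc (0 : ℝ) 1 :=
    ⟨hc₀.le.trans (hp k).1, by linarith [(hp k).2]⟩
  have hεcβ : 1000 * ε ≤ c * β := by
    rwa [div_mul_eq_mul_div, div_le_iff₀' hc₀] at hεβ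
  have hβ₀ : 0 < β := by nlinarith
  have hεβ' : 2000 * ε ≤ β := by nlinarith
  have hwP : 0.9 ≤ wP := by linarith [hN.one_sub_le_wP]
  have hpq (k : BNIdx d Par) : |p k - q k| ≤ c / 2 := by
    have hcoord := wP_mul_prCfg_mul_abs_sub_le hPar hN (by linarith) hq hmean k
    have hcoordβ : 0.9 * (β * |p k - q k|) ≤ 3 * ε :=
      (mul_le_mul hwP (mul_le_mul_of_nonneg_right (hβ k) (abs_nonneg _)) (by positivity)
        (by linarith)).trans hcoord
    by_contra! hlt
    nlinarith [mul_lt_mul_of_pos_left hlt hβ₀]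
  have hDc := dTV_bnDist_le hPar (half_pos hc₀)
    (fun k => ⟨by linarith [(hp k).1], by linarith [(hp k).2]⟩) hpq (tableDist_nonneg p q)
    (sq_tableDist hPar hp₀ q).ge
  refine hDc.trans ?_
  rw [← div_div]
  gcongr
  rw [le_div_iff₀' (Real.sqrt_pos.2 hβ₀)]
  exact sqrt_mul_tableDist_le hPar hN hp₀ hε hl hεβ' hβ₁ hβ hq hmean hK

end Stability

end BayesNet

theorem small_specNorm_implies_tv_close_general {c C₁ : ℝ} (hc : c ∈ Set.Ioc (0 : ℝ) (1 / 2))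
    (hC₁ : 0 ≤ C₁) {d : ℕ} (hd : 1 ≤ d) {Par : Fin d → Finset (Fin d)}
    (hPar : ∀ i : Fin d, ∀ j ∈ Par i, j < i) {ε : ℝ} (hε : 0 < ε) {p q : BNIdx d Par → ℝ}
    (hp : ∀ k, p k ∈ Set.Icc c (1 - c)) (hq : ∀ k, q k ∈ Set.Icc (0 : ℝ) 1)
    {R E L : (Fin d → Bool) → ℝ} {wP wE wL : ℝ}
    (hN : NoiseModel ε (bnDist Par p) R E L wP wE wL)
    (hmin : ∀ k, 1000 / c * ε ≤ prCfg Par (bnDist Par p) k)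
    (hmean : enorm2 (fun k => q k - expec R (fun x => Fvec Par x q k)) ≤ ε)
    {M : Matrix (BNIdx d Par) (BNIdx d Par) ℝ} (hM : specNorm (M - covM0 Par R q) ≤ ε)
    {α : ℝ} (hα : |α - ⨅ k, prCfg Par R k| ≤ ε)
    (hMα : specNorm M ≤ C₁ * ε * Real.log (1 / ε) / α) :
    dTV (bnDist Par p) (bnDist Par q) ≤
      6 * (C₁ + 22) / c * ε * √(Real.log (1 / ε)) / ⨅ k, prCfg Par (bnDist Par p) k := by
  have : Nonempty (BNIdx d Par) := ⟨⟨⟨0, hd⟩, fun _ => false⟩⟩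
  set β := ⨅ k, prCfg Par (bnDist Par p) k
  have hβ (k : BNIdx d Par) : β ≤ prCfg Par (bnDist Par p) k :=
    ciInf_le (Set.finite_range _).bddBelow k
  have hβ₁ : β ≤ 1 := (hβ (Classical.arbitrary _)).trans (prCfg_le_one hN.isProbDist_P _)
  have hεcβ : 1000 / c * ε ≤ β := le_ciInf hmin
  have hc' : 2000 ≤ 1000 / c := by
    rw [le_div_iff₀ hc.1]
    linarith [hc.2]
  have hεβ : 2000 * ε ≤ β := (mul_le_mul_of_nonneg_right hc' hε.le).trans hεcβ
  have hβ₀ : 0 < β := by linarith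
  have hl : 1 ≤ Real.log (1 / ε) :=
    one_le_log_one_div hε (by linarith [Real.exp_neg_one_gt_d9])
  have hαβ : β / 2 ≤ α := by linarith [half_iInf_prCfg_add_le hN hε.le hεβ, (abs_le.1 hα).1]
  have hK := (specNorm_le_specNorm_add_specNorm_sub M (covM0 Par R q)).trans (add_le_add hMα hM)
  calc dTV (bnDist Par p) (bnDist Par q)
      ≤ (3 * √(ε * (C₁ * ε * Real.log (1 / ε) / α + ε)) +
          63 * (ε * √(Real.log (1 / ε)) / √β)) / (√β * (c / 2)) :=
        dTV_bnDist_le_of_specNorm_covM0_le hPar hN hε hl hc hp hεcβ hβ₁ hβ hq hmean hK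
    _ ≤ (3 * ((C₁ + 1) * (ε * √(Real.log (1 / ε)) / √β)) +
          63 * (ε * √(Real.log (1 / ε)) / √β)) / (√β * (c / 2)) := by
        have := hc.1
        gcongr
        exact sqrt_mul_add_le hε.le hβ₀ hβ₁ hl hαβ hC₁
    _ = 6 * (C₁ + 22) / c * ε * √(Real.log (1 / ε)) / β := by
        have hβ_sqrt : √β ^ 2 = β := Real.sq_sqrt hβ₀.le
        have := hc.1
        field_simp
        rw [hβ_sqrt]
        ring

theorem small_specNorm_implies_tv_close :
    ∀ (c C₁ : ℝ), c ∈ Set.Ioc (0:ℝ) (1/2) → 0 < C₁ →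
    ∃ c₂ C₃ : ℝ, 0 < c₂ ∧ 0 < C₃ ∧ ∃ ε₀ : ℝ, ε₀ ∈ Set.Ioo (0:ℝ) 1 ∧
      ∀ (d : ℕ), 1 ≤ d → ∀ (Par : Fin d → Finset (Fin d)),
        (∀ i : Fin d, ∀ j ∈ Par i, j < i) →
        ∀ (ε : ℝ), ε ∈ Set.Ioo 0 ε₀ →
        ∀ (p q : BNIdx d Par → ℝ),
          (∀ k, p k ∈ Set.Icc c (1 - c)) → (∀ k, q k ∈ Set.Icc (0:ℝ) 1) →
        ∀ (Ptld Edist Ldist : (Fin d → Bool) → ℝ),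
          IsProbDist Ptld → IsProbDist Edist → IsProbDist Ldist →
          (∀ x, Edist x = 0 ∨ Ldist x = 0) →
        ∀ (wP wE wL : ℝ), 0 ≤ wE → 0 ≤ wL → wE + wL ≤ 2 * ε →
          wP + wE - wL = 1 →
          (∀ x, Ptld x = wP * bnDist Par p x + wE * Edist x - wL * Ldist x) →
          (∀ k : BNIdx d Par,
            c₂ * Real.sqrt ε * Real.log (1 / ε) ^ ((1:ℝ)/4)
              ≤ prCfg Par (bnDist Par p) k) →
          enorm2 (fun k : BNIdx d Par =>
            q k - expec Ptld (fun x => Fvec Par x q k)) ≤ ε →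
        ∀ (M : Matrix (BNIdx d Par) (BNIdx d Par) ℝ), M.IsSymm →
          (∀ k, M k k = 0) →
          specNorm (M - covM0 Par Ptld q) ≤ ε →
        ∀ (α : ℝ), 0 < α →
          |α - ⨅ k : BNIdx d Par, prCfg Par Ptld k| ≤ ε →
          specNorm M ≤ C₁ * ε * Real.log (1 / ε) / α →
          dTV (bnDist Par p) (bnDist Par q) ≤
            C₃ * ε * Real.sqrt (Real.log (1 / ε)) /
              ⨅ k : BNIdx d Par, prCfg Par (bnDist Par p) k := by
  intro c C₁ hc hC₁
  have hc₀ : 0 < c := hc.1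
  refine ⟨1000 / c, 6 * (C₁ + 22) / c, by positivity, by positivity, Real.exp (-1),
    ⟨Real.exp_pos _, Real.exp_lt_one_iff.2 (by norm_num)⟩, ?_⟩
  intro d hd Par hPar ε hε p q hp hq Ptld Edist Ldist hPtld hE hL hdisj wP wE wL hwE hwL hw
    hw₁ hPtld_eq hmin hmean M _ _ hM α _ hα hMα
  have hP : IsProbDist (bnDist Par p) :=
    isProbDist_bnDist hPar fun k => ⟨hc₀.le.trans (hp k).1, by linarith [(hp k).2]⟩
  have hN : NoiseModel ε (bnDist Par p) Ptld Edist Ldist wP wE wL :=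
    ⟨hP, hPtld, hE, hL, hdisj, hwE, hwL, hw, hw₁, hPtld_eq⟩
  have hmin_linear (k : BNIdx d Par) : 1000 / c * ε ≤ prCfg Par (bnDist Par p) k := by
    refine le_trans ?_ (hmin k)
    rw [mul_assoc]
    gcongr
    exact le_sqrt_mul_rpow_log hε.1 hε.2.le (by norm_num)
  exact small_specNorm_implies_tv_close_general hc hC₁.le hd hPar hε.1 hp hq hN hmin_linear hmean hM
    hα hMα
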